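/- Let D ⊂ ℝⁿ be a bounded, connected Lipschitz domain and let G be the Dirichlet Green's function on D. If f ∈ L^q(D) with q > n, then the weak solution u = Tf ∈ W^{1,2}_0(D) of Δu = f in D, u = 0 on ∂D, satisfies the pointwise representation u(x) = ∫_D G(x,y) f(y) dy for all x ∈ D. -/

import Mathlib

open MeasureTheory Metric Set Filter Bornology
open scoped ENNReal NNReal Topology RealInnerProductSpace symmDiff

noncomputable section

variable {n : ℕ}

/-- Smooth, compactly supported test functions in an open set `Ω`. -/
def IsTestFun (Ω : Set (EuclideanSpace ℝ (Fin n))) (φ : EuclideanSpace ℝ (Fin n) → ℝ) : Prop :=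
  ContDiff ℝ (⊤ : ℕ∞) φ ∧ HasCompactSupport φ ∧ tsupport φ ⊆ Ω

/-- Membership in the Sobolev space `W^{1,p}(Ω)`: the function and its (a.e. defined)
gradient belong to `L^p(Ω)`. -/
def MemW1p (Ω : Set (EuclideanSpace ℝ (Fin n))) (p : ℝ≥0∞)
    (u : EuclideanSpace ℝ (Fin n) → ℝ) : Prop :=
  MemLp u p (volume.restrict Ω) ∧ MemLp (fun x => gradient u x) p (volume.restrict Ω)

/-- Membership in `W^{1,p}_0(Ω)`: membership in `W^{1,p}(Ω)` together with zero boundary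
trace, expressed as approximability by test functions in the `W^{1,p}` norm. -/
def MemW1p0 (Ω : Set (EuclideanSpace ℝ (Fin n))) (p : ℝ≥0∞)
    (u : EuclideanSpace ℝ (Fin n) → ℝ) : Prop :=
  MemW1p Ω p u ∧ ∃ φ : ℕ → EuclideanSpace ℝ (Fin n) → ℝ,
    (∀ k, IsTestFun Ω (φ k)) ∧
    Tendsto (fun k => eLpNorm (fun x => u x - φ k x) p (volume.restrict Ω)
        + eLpNorm (fun x => gradient u x - gradient (φ k) x) p (volume.restrict Ω))
      atTop (nhds 0)

/-- Membership in `W^{1,2}_0(Ω)`. -/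
def MemW120 (Ω : Set (EuclideanSpace ℝ (Fin n))) (u : EuclideanSpace ℝ (Fin n) → ℝ) : Prop :=
  MemW1p0 Ω 2 u

/-- `Δ u = f` holds weakly in `Ω`:
`∫_Ω ∇u · ∇φ = - ∫_Ω f φ` for all test functions `φ ∈ C_c^∞(Ω)`. -/
def WeakLapEq (Ω : Set (EuclideanSpace ℝ (Fin n))) (f u : EuclideanSpace ℝ (Fin n) → ℝ) : Prop :=
  ∀ φ : EuclideanSpace ℝ (Fin n) → ℝ, IsTestFun Ω φ →
    ∫ x in Ω, ⟪gradient u x, gradient φ x⟫ = - ∫ x in Ω, f x * φ x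

/-- `u = OS(g, ψ)` is the obstacle problem solution in `D` with Laplacian data `g` and
boundary data `ψ`: a nonnegative `W^{1,2}(D)` function with `Δu = χ_{{u>0}} g` weakly in `D`
and `u = ψ` on `∂D` (attained continuously). -/
structure IsObstacleSol (D : Set (EuclideanSpace ℝ (Fin n)))
    (g ψ u : EuclideanSpace ℝ (Fin n) → ℝ) : Prop where
  nonneg : ∀ x ∈ D, 0 ≤ u x
  sobolev : MemW1p D 2 u
  weakEq : WeakLapEq D (Set.indicator {y | 0 < u y} g) u
  contOn : ContinuousOn u (closure D)
  bdry : Set.EqOn u ψ (frontier D)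

/-- The contact set `Λ(u) = {x ∈ D : u(x) = 0}`. -/
def contactSet (D : Set (EuclideanSpace ℝ (Fin n)))
    (u : EuclideanSpace ℝ (Fin n) → ℝ) : Set (EuclideanSpace ℝ (Fin n)) :=
  {x ∈ D | u x = 0}

/-- The non-contact set `Ω(u) = {x ∈ D : u(x) > 0}`. -/
def noncontactSet (D : Set (EuclideanSpace ℝ (Fin n)))
    (u : EuclideanSpace ℝ (Fin n) → ℝ) : Set (EuclideanSpace ℝ (Fin n)) :=
  {x ∈ D | 0 < u x}

/-- `D_{-η} = {x ∈ D : dist(x, ∂D) ≥ η}`. -/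
def innerDomain (D : Set (EuclideanSpace ℝ (Fin n))) (η : ℝ) : Set (EuclideanSpace ℝ (Fin n)) :=
  {x ∈ D | η ≤ infDist x (frontier D)}

/-- A bounded Lipschitz domain: a bounded open set whose boundary is locally, after a rigid
motion, the graph of a Lipschitz function (with the domain lying on one side). -/
def IsLipschitzDomain (D : Set (EuclideanSpace ℝ (Fin n))) : Prop :=
  IsOpen D ∧ IsBounded D ∧
    ∀ x ∈ frontier D,
      ∃ (U : Set (EuclideanSpace ℝ (Fin n)))
        (e : EuclideanSpace ℝ (Fin n) ≃ᵢ EuclideanSpace ℝ (Fin n))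
        (φ : (Fin n → ℝ) → ℝ) (L : ℝ≥0) (j : Fin n),
        x ∈ U ∧ IsOpen U ∧ LipschitzWith L φ ∧
        ∀ y ∈ U, (y ∈ D ↔
          φ (Function.update ((EuclideanSpace.equiv (Fin n) ℝ) (e y)) j 0)
            < (EuclideanSpace.equiv (Fin n) ℝ) (e y) j)

/-- `G` is a Dirichlet Green's function for `D`: for smooth compactly supported right hand
sides, the (continuous representative of the) weak solution of the homogeneous Dirichlet
problem is represented by integration against `G`. -/
def IsGreenFunction (D : Set (EuclideanSpace ℝ (Fin n)))
    (G : EuclideanSpace ℝ (Fin n) → EuclideanSpace ℝ (Fin n) → ℝ) : Prop :=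
  ∀ f, IsTestFun D f → ∀ u, MemW120 D u → WeakLapEq D f u → ContinuousOn u D →
    ∀ x ∈ D, u x = ∫ y in D, G x y * f y

/-- `f` is harmonic on `D`: twice differentiable with vanishing Laplacian at each point. -/
def IsHarmonicOn (f : EuclideanSpace ℝ (Fin n) → ℝ) (D : Set (EuclideanSpace ℝ (Fin n))) : Prop :=
  (∀ x ∈ D, ContDiffAt ℝ 2 f x) ∧
    ∀ x ∈ D, ∑ i : Fin n,
      iteratedFDeriv ℝ 2 f x ![EuclideanSpace.single i 1, EuclideanSpace.single i 1] = 0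

/-- `Ξ` is the harmonic extension of the boundary data `φ` to `D`. -/
def IsHarmonicExtension (D : Set (EuclideanSpace ℝ (Fin n)))
    (φ Ξ : EuclideanSpace ℝ (Fin n) → ℝ) : Prop :=
  ContinuousOn Ξ (closure D) ∧ IsHarmonicOn Ξ D ∧ Set.EqOn Ξ φ (frontier D)

/-- `K` is the Poisson kernel of `D` (with respect to surface measure, i.e. `(n-1)`-dimensional
Hausdorff measure on `∂D`): every harmonic extension of continuous boundary data is recovered
by integrating the boundary data against `K` over `∂D`. -/
def IsPoissonKernel (D : Set (EuclideanSpace ℝ (Fin n)))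
    (K : EuclideanSpace ℝ (Fin n) → EuclideanSpace ℝ (Fin n) → ℝ) : Prop :=
  ∀ φ, ContinuousOn φ (frontier D) → ∀ Ξ, IsHarmonicExtension D φ Ξ →
    ∀ y ∈ D, Ξ y = ∫ x in frontier D, φ x * K y x ∂μH[(n : ℝ) - 1]

/-!
Cutting off `G x` near its pole `x` gives a compactly supported `E` and a test function `R` with
`Δ E = δ₀ + R`, after translating the pole to the origin. Convolution with `E` inverts the
Laplacian locally up to the smoothing operator `R ⋆ ·`. Hence weak solutions with smooth data have
smooth representatives, so that `G` represents the solution for every test function; and if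
`Δ u = f` then `|u x| ≤ ‖E‖_p ‖f‖_q + ‖R‖_2 ‖u‖_2`, where `q > n` is what puts `E` into the dual
exponent `p < n / (n - 1)`. By the energy estimate and Sobolev's inequality `‖u‖_2 ≤ C ‖f‖_q`, so
both `u x` and `∫ y in D, G x y * f y` depend continuously on `f` in `L^q(D)`. They agree for test
functions, which are dense.
-/

open scoped Gradient Laplacian Convolution

local notation:max "ℝ^" n:max => EuclideanSpace ℝ (Fin n)

/-! ### Test functions and the Laplacian -/

/-- The partial derivative `∂φ/∂x_i`, as a function. -/
def partialDeriv (i : Fin n) (φ : ℝ^n → ℝ) : ℝ^n → ℝ :=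
  fun x => fderiv ℝ φ x (EuclideanSpace.single i 1)

section PartialDerivatives

variable {φ ψ : ℝ^n → ℝ} {x : ℝ^n}

lemma contDiff_partialDeriv (hφ : ContDiff ℝ (⊤ : ℕ∞) φ) (i : Fin n) :
    ContDiff ℝ (⊤ : ℕ∞) (partialDeriv i φ) :=
  (hφ.fderiv_right (by simp)).clm_apply contDiff_const

lemma differentiable_partialDeriv (hφ : ContDiff ℝ 2 φ) (i : Fin n) :
    Differentiable ℝ (partialDeriv i φ) :=
  ((hφ.fderiv_right one_add_one_eq_two.le).clm_apply contDiff_const).differentiable one_ne_zero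

lemma gradient_apply (φ : ℝ^n → ℝ) (x : ℝ^n) (i : Fin n) : ∇ φ x i = partialDeriv i φ x := by
  rw [partialDeriv, ← inner_gradient_left, EuclideanSpace.inner_single_right]
  simp

lemma inner_gradient_eq_sum (V : ℝ^n) (φ : ℝ^n → ℝ) (x : ℝ^n) :
    ⟪V, ∇ φ x⟫ = ∑ i, V i * partialDeriv i φ x := by
  simp only [PiLp.inner_apply, gradient_apply, RCLike.inner_apply, conj_trivial, mul_comm]

lemma partialDeriv_add (i : Fin n) (hφ : DifferentiableAt ℝ φ x) (hψ : DifferentiableAt ℝ ψ x) :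
    partialDeriv i (φ + ψ) x = partialDeriv i φ x + partialDeriv i ψ x := by
  simp [partialDeriv, fderiv_add hφ hψ]

lemma partialDeriv_mul (i : Fin n) (hφ : DifferentiableAt ℝ φ x) (hψ : DifferentiableAt ℝ ψ x) :
    partialDeriv i (φ * ψ) x = φ x * partialDeriv i ψ x + partialDeriv i φ x * ψ x := by
  simp [partialDeriv, fderiv_mul hφ hψ, mul_comm]

lemma partialDeriv_eventuallyEq_zero {c : ℝ} (h : φ =ᶠ[𝓝 x] fun _ => c) (i : Fin n) :
    partialDeriv i φ =ᶠ[𝓝 x] fun _ => 0 := by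
  filter_upwards [h.fderiv (𝕜 := ℝ)] with y hy
  simp [partialDeriv, hy]

lemma laplacian_eq_sum_partialDeriv (hφ : ContDiff ℝ 2 φ) :
    Δ φ = ∑ i, partialDeriv i (partialDeriv i φ) := by
  have hd : Differentiable ℝ (fderiv ℝ φ) :=
    (hφ.fderiv_right one_add_one_eq_two.le).differentiable one_ne_zero
  rw [InnerProductSpace.laplacian_eq_iteratedFDeriv_orthonormalBasis φ
    (EuclideanSpace.basisFun (Fin n) ℝ)]
  ext x
  rw [Finset.sum_apply]
  refine Finset.sum_congr rfl fun i _ => ?_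
  unfold partialDeriv
  rw [fderiv_clm_apply (hd x) (differentiableAt_const _)]
  simp [iteratedFDeriv_two_apply]

lemma laplacian_mul (hφ : ContDiff ℝ 2 φ) (hψ : ContDiff ℝ 2 ψ) :
    Δ (φ * ψ) = φ * Δ ψ + 2 * ∑ i, partialDeriv i φ * partialDeriv i ψ + Δ φ * ψ := by
  rw [laplacian_eq_sum_partialDeriv (φ := φ * ψ) (hφ.mul hψ), laplacian_eq_sum_partialDeriv hφ,
    laplacian_eq_sum_partialDeriv hψ, Finset.mul_sum, Finset.mul_sum, Finset.sum_mul,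
    ← Finset.sum_add_distrib, ← Finset.sum_add_distrib]
  refine Finset.sum_congr rfl fun i _ => ?_
  have hφ' := hφ.differentiable two_ne_zero
  have hψ' := hψ.differentiable two_ne_zero
  have hφi := differentiable_partialDeriv hφ i
  have hψi := differentiable_partialDeriv hψ i
  have leibniz : partialDeriv i (φ * ψ) = φ * partialDeriv i ψ + partialDeriv i φ * ψ :=
    funext fun y => partialDeriv_mul i (hφ' y) (hψ' y)
  ext x
  rw [leibniz, partialDeriv_add i ((hφ' x).mul (hψi x)) ((hφi x).mul (hψ' x)),
    partialDeriv_mul i (hφ' x) (hψi x), partialDeriv_mul i (hφi x) (hψ' x)]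
  simp only [Pi.add_apply, Pi.mul_apply, Pi.ofNat_apply]
  ring

lemma contDiff_laplacian (hφ : ContDiff ℝ (⊤ : ℕ∞) φ) : ContDiff ℝ (⊤ : ℕ∞) (Δ φ) := by
  rw [laplacian_eq_sum_partialDeriv (mod_cast contDiff_infty.1 hφ 2), Finset.sum_fn]
  exact ContDiff.sum fun i _ => contDiff_partialDeriv (contDiff_partialDeriv hφ i) i

lemma laplacian_comp_add_left (φ : ℝ^n → ℝ) (a x : ℝ^n) :
    Δ (fun y => φ (a + y)) x = Δ φ (a + x) := by
  simp only [InnerProductSpace.laplacian_eq_iteratedFDeriv_stdOrthonormalBasis,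
    iteratedFDeriv_comp_add_left]

lemma continuous_gradient (hφ : ContDiff ℝ 1 φ) : Continuous (∇ φ) :=
  (LinearIsometryEquiv.continuous _).comp (hφ.continuous_fderiv one_ne_zero)

end PartialDerivatives

/-- The vector space `C_c^∞(Ω)` of test functions. -/
def testFunctions (Ω : Set ℝ^n) : Submodule ℝ (ℝ^n → ℝ) where
  carrier := {φ | IsTestFun Ω φ}
  zero_mem' := ⟨contDiff_const, HasCompactSupport.zero, by simp [tsupport, Function.support_zero]⟩
  add_mem' {φ ψ} hφ hψ :=
    ⟨hφ.1.add hψ.1, hφ.2.1.add hψ.2.1, (tsupport_add φ ψ).trans (union_subset hφ.2.2 hψ.2.2)⟩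
  smul_mem' c _ hφ :=
    ⟨hφ.1.const_smul c, hφ.2.1.smul_left (f := fun _ => c),
      (tsupport_smul_subset_right (fun _ => c) _).trans hφ.2.2⟩

namespace IsTestFun

variable {Ω Ω' : Set ℝ^n} {φ ψ : ℝ^n → ℝ}

lemma mono (hφ : IsTestFun Ω φ) (hΩ : Ω ⊆ Ω') : IsTestFun Ω' φ :=
  ⟨hφ.1, hφ.2.1, hφ.2.2.trans hΩ⟩

lemma eq_zero (hφ : IsTestFun Ω φ) {x : ℝ^n} (hx : x ∉ Ω) : φ x = 0 :=
  image_eq_zero_of_notMem_tsupport fun h => hx (hφ.2.2 h)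

lemma differentiable (hφ : IsTestFun Ω φ) : Differentiable ℝ φ :=
  hφ.1.differentiable (by simp)

lemma mul_right (hφ : IsTestFun Ω φ) (hψ : ContDiff ℝ (⊤ : ℕ∞) ψ) : IsTestFun Ω (φ * ψ) :=
  ⟨hφ.1.mul hψ, hφ.2.1.mul_right, tsupport_mul_subset_left.trans hφ.2.2⟩

protected lemma partialDeriv (hφ : IsTestFun Ω φ) (i : Fin n) : IsTestFun Ω (partialDeriv i φ) :=
  ⟨contDiff_partialDeriv hφ.1 i, hφ.2.1.fderiv_apply ℝ _,
    (tsupport_fderiv_apply_subset ℝ _).trans hφ.2.2⟩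

lemma laplacian_eq (hφ : IsTestFun Ω φ) :
    Δ φ = ∑ i, partialDeriv i (partialDeriv i φ) :=
  laplacian_eq_sum_partialDeriv (mod_cast contDiff_infty.1 hφ.1 2)

protected lemma laplacian (hφ : IsTestFun Ω φ) : IsTestFun Ω (Δ φ) := by
  rw [hφ.laplacian_eq]
  exact (testFunctions Ω).sum_mem fun i _ => (hφ.partialDeriv i).partialDeriv i

lemma memLp (hφ : IsTestFun Ω φ) (p : ℝ≥0∞) (μ : Measure ℝ^n) [IsFiniteMeasureOnCompacts μ] :
    MemLp φ p μ :=
  hφ.1.continuous.memLp_of_hasCompactSupport hφ.2.1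

lemma integrable (hφ : IsTestFun Ω φ) (μ : Measure ℝ^n) [IsFiniteMeasureOnCompacts μ] :
    Integrable φ μ :=
  hφ.1.continuous.integrable_of_hasCompactSupport hφ.2.1

lemma memLp_gradient (hφ : IsTestFun Ω φ) (p : ℝ≥0∞) (μ : Measure ℝ^n)
    [IsFiniteMeasureOnCompacts μ] : MemLp (∇ φ) p μ :=
  (continuous_gradient (mod_cast contDiff_infty.1 hφ.1 1)).memLp_of_hasCompactSupport
    ((hφ.2.1.fderiv ℝ).comp_left (map_zero (InnerProductSpace.toDual ℝ ℝ^n).symm))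

lemma gradient_eq_zero (hφ : IsTestFun Ω φ) {x : ℝ^n} (hx : x ∉ Ω) : ∇ φ x = 0 := by
  ext i
  rw [gradient_apply, (hφ.partialDeriv i).eq_zero hx, PiLp.zero_apply]

lemma setIntegral_mul (hφ : IsTestFun Ω φ) (g : ℝ^n → ℝ) :
    ∫ x in Ω, g x * φ x = ∫ x, g x * φ x :=
  setIntegral_eq_integral_of_forall_compl_eq_zero fun x hx => by rw [hφ.eq_zero hx, mul_zero]

lemma comp_sub_left (hφ : IsTestFun Ω φ) (a : ℝ^n) :
    IsTestFun ((a - ·) ⁻¹' Ω) fun x => φ (a - x) :=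
  ⟨hφ.1.comp (contDiff_const.sub contDiff_id),
    hφ.2.1.comp_homeomorph (Homeomorph.subLeft a), fun _ hx =>
      hφ.2.2 (tsupport_comp_subset_preimage φ (Homeomorph.subLeft a).continuous hx)⟩

lemma memLp_mul (hφ : IsTestFun Ω φ) (hΩ : MeasurableSet Ω) {g : ℝ^n → ℝ} {p : ℝ≥0∞}
    (hg : MemLp g p (volume.restrict Ω)) : MemLp (φ * g) p := by
  have hind : Ω.indicator (φ * g) = φ * g :=
    indicator_eq_self.2 fun x hx => by
      by_contra hxΩ
      exact hx (by rw [Pi.mul_apply, hφ.eq_zero hxΩ, zero_mul])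
  rw [← hind, memLp_indicator_iff_restrict hΩ]
  exact hg.mul (hφ.memLp ∞ _)

lemma integral_mul_partialDeriv (hφ : IsTestFun Ω φ) (hψ : ContDiff ℝ (⊤ : ℕ∞) ψ) (i : Fin n) :
    ∫ x, φ x * partialDeriv i ψ x = -∫ x, partialDeriv i φ x * ψ x :=
  integral_mul_fderiv_eq_neg_fderiv_mul_of_integrable
    (((hφ.partialDeriv i).mul_right hψ).integrable volume)
    ((hφ.mul_right (contDiff_partialDeriv hψ i)).integrable volume)
    ((hφ.mul_right hψ).integrable volume) (fun x _ => hφ.differentiable x)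
    (fun x _ => hψ.differentiable (by simp) x)

lemma integral_sum_mul_partialDeriv {V : Fin n → ℝ^n → ℝ} (hV : ∀ i, IsTestFun Ω (V i))
    (hψ : ContDiff ℝ (⊤ : ℕ∞) ψ) :
    ∫ x, ∑ i, V i x * partialDeriv i ψ x = -∫ x, (∑ i, partialDeriv i (V i)) x * ψ x := by
  have int_left (i : Fin n) : Integrable fun x => V i x * partialDeriv i ψ x :=
    ((hV i).mul_right (contDiff_partialDeriv hψ i)).integrable _
  have int_right (i : Fin n) : Integrable fun x => partialDeriv i (V i) x * ψ x :=
    (((hV i).partialDeriv i).mul_right hψ).integrable _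
  simp_rw [Finset.sum_apply, Finset.sum_mul]
  rw [integral_finsetSum _ fun i _ => int_left i, integral_finsetSum _ fun i _ => int_right i,
    ← Finset.sum_neg_distrib]
  exact Finset.sum_congr rfl fun i _ => (hV i).integral_mul_partialDeriv hψ i

lemma integral_inner_gradient (hφ : ContDiff ℝ (⊤ : ℕ∞) φ) (hψ : IsTestFun Ω ψ) :
    ∫ x in Ω, ⟪∇ φ x, ∇ ψ x⟫ = -∫ x in Ω, φ x * Δ ψ x := by
  rw [hψ.laplacian.setIntegral_mul, setIntegral_eq_integral_of_forall_compl_eq_zero fun x hx => by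
    rw [hψ.gradient_eq_zero hx, inner_zero_right]]
  calc ∫ x, ⟪∇ φ x, ∇ ψ x⟫
      = ∫ x, ∑ i, partialDeriv i ψ x * partialDeriv i φ x := by
        simp_rw [inner_gradient_eq_sum, gradient_apply, mul_comm]
    _ = -∫ x, φ x * Δ ψ x := by
        rw [integral_sum_mul_partialDeriv hψ.partialDeriv hφ, hψ.laplacian_eq]
        simp_rw [mul_comm]

lemma memW120 (hφ : IsTestFun Ω φ) : MemW120 Ω φ :=
  ⟨⟨hφ.memLp 2 _, hφ.memLp_gradient 2 _⟩, fun _ => φ, fun _ => hφ, by simp⟩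

lemma weakLapEq (hφ : IsTestFun Ω φ) : WeakLapEq Ω (Δ φ) φ := fun ψ hψ => by
  simpa only [real_inner_comm, mul_comm] using integral_inner_gradient hψ.1 hφ

end IsTestFun

/-! ### Convolutions -/

section Hoelder

variable {α : Type*} [MeasurableSpace α] {μ : Measure α} {f g : α → ℝ} {p q : ℝ≥0∞}

lemma enorm_integral_mul_le [ENNReal.HolderConjugate p q] (hf : AEStronglyMeasurable f μ)
    (hg : AEStronglyMeasurable g μ) :
    ‖∫ x, f x * g x ∂μ‖ₑ ≤ eLpNorm f p μ * eLpNorm g q μ := by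
  refine (enorm_integral_le_lintegral_enorm _).trans ?_
  have hoelder : eLpNorm (f • g) 1 μ ≤ eLpNorm f p μ * eLpNorm g q μ :=
    eLpNorm_smul_le_mul_eLpNorm hg hf
  rwa [eLpNorm_one_eq_lintegral_enorm] at hoelder

end Hoelder

section Convolution

variable {G : Type*} [AddCommGroup G] [MeasurableSpace G] [MeasurableAdd₂ G] [MeasurableNeg G]
  {μ : Measure G} [μ.IsAddLeftInvariant] [μ.IsNegInvariant] {f g ψ : G → ℝ}

lemma enorm_convolution_le {p q : ℝ≥0∞} [ENNReal.HolderConjugate p q]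
    (hf : AEStronglyMeasurable f μ) (hg : AEStronglyMeasurable g μ) (x : G) :
    ‖(f ⋆[ContinuousLinearMap.lsmul ℝ ℝ, μ] g) x‖ₑ ≤ eLpNorm f p μ * eLpNorm g q μ := by
  have reflect : MeasurePreserving (x - ·) μ μ := μ.measurePreserving_sub_left x
  rw [← eLpNorm_comp_measurePreserving hg reflect]
  exact enorm_integral_mul_le hf (hg.comp_measurePreserving reflect)

lemma integral_mul_convolution [SFinite μ] {C : ℝ} (hf : Integrable f μ) (hg : Integrable g μ)
    (hψ : AEStronglyMeasurable ψ μ) (hψC : ∀ x, ‖ψ x‖ ≤ C) :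
    ∫ x, g x * (f ⋆[ContinuousLinearMap.lsmul ℝ ℝ, μ] ψ) x ∂μ =
      ∫ x, ((fun t => f (-t)) ⋆[ContinuousLinearMap.lsmul ℝ ℝ, μ] g) x * ψ x ∂μ := by
  have integrable_uncurry :
      Integrable (fun z : G × G => g z.2 * f (-(z.1 - z.2)) * ψ z.1) (μ.prod μ) :=
    (hg.convolution_integrand (ContinuousLinearMap.lsmul ℝ ℝ) hf.comp_neg).mul_bdd hψ.comp_fst
      (ae_of_all _ fun z => hψC z.1)
  calc ∫ y, g y * (f ⋆[ContinuousLinearMap.lsmul ℝ ℝ, μ] ψ) y ∂μ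
      = ∫ y, ∫ s, g y * f (-(s - y)) * ψ s ∂μ ∂μ := by
        simp_rw [convolution_eq_swap, ContinuousLinearMap.lsmul_apply, smul_eq_mul,
          ← integral_const_mul, neg_sub, mul_assoc]
    _ = ∫ s, ∫ y, g y * f (-(s - y)) * ψ s ∂μ ∂μ := (integral_integral_swap integrable_uncurry).symm
    _ = _ := by
        simp_rw [convolution_eq_swap, ContinuousLinearMap.lsmul_apply, smul_eq_mul,
          ← integral_mul_const, mul_comm (g _)]

end Convolution

section ConvolutionSmooth

variable {E ψ : ℝ^n → ℝ}

lemma partialDeriv_convolution (hE : LocallyIntegrable E) (hψ : ContDiff ℝ 1 ψ)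
    (hψc : HasCompactSupport ψ) (i : Fin n) :
    partialDeriv i (E ⋆ ψ) = E ⋆ partialDeriv i ψ := by
  ext y
  rw [partialDeriv, (hψc.hasFDerivAt_convolution_right _ hE hψ y).fderiv,
    convolution_precompR_apply _ hE (hψc.fderiv ℝ) (hψ.continuous_fderiv one_ne_zero)]
  rfl

lemma IsTestFun.laplacian_convolution {Ω : Set ℝ^n} (hψ : IsTestFun Ω ψ)
    (hE : LocallyIntegrable E) : Δ (E ⋆ ψ) = E ⋆ Δ ψ := by
  have hd {φ : ℝ^n → ℝ} (hφ : IsTestFun Ω φ) (i : Fin n) :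
      partialDeriv i (E ⋆ φ) = E ⋆ partialDeriv i φ :=
    partialDeriv_convolution hE (mod_cast contDiff_infty.1 hφ.1 1) hφ.2.1 i
  have hsmooth : ContDiff ℝ 2 (E ⋆ ψ) :=
    hψ.2.1.contDiff_convolution_right _ hE (mod_cast contDiff_infty.1 hψ.1 2)
  rw [laplacian_eq_sum_partialDeriv hsmooth, hψ.laplacian_eq]
  simp_rw [hd hψ, hd (hψ.partialDeriv _)]
  ext y
  have hint (i : Fin n) : ConvolutionExistsAt E (partialDeriv i (partialDeriv i ψ)) y
      (ContinuousLinearMap.lsmul ℝ ℝ) volume :=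
    let hi := (hψ.partialDeriv i).partialDeriv i
    hi.2.1.convolutionExists_right _ hE hi.1.continuous y
  simp only [Finset.sum_apply, convolution_def, map_sum]
  exact (integral_finsetSum _ fun i _ => hint i).symm

open scoped Pointwise in
lemma IsTestFun.convolution {D : Set ℝ^n} {x : ℝ^n} {δ ε : ℝ} (hδ : 0 < δ) (hε : 0 < ε)
    (hψ : IsTestFun (ball x ε) ψ) (hE : LocallyIntegrable E)
    (hEδ : Function.support E ⊆ ball 0 δ) (hD : closedBall x (δ + ε) ⊆ D) :
    IsTestFun D (E ⋆ ψ) := by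
  have hsupp : tsupport (E ⋆ ψ) ⊆ closedBall x (δ + ε) := by
    refine closure_minimal ?_ isClosed_closedBall
    calc Function.support (E ⋆ ψ)
        ⊆ Function.support E + Function.support ψ := by
          simpa only [add_comm] using
            support_convolution_subset (ContinuousLinearMap.lsmul ℝ ℝ) (f := E) (g := ψ)
      _ ⊆ ball 0 δ + ball x ε := add_subset_add hEδ ((subset_tsupport ψ).trans hψ.2.2)
      _ ⊆ closedBall x (δ + ε) := by
          rw [ball_add_ball hδ hε, zero_add]
          exact ball_subset_closedBall
  exact ⟨hψ.2.1.contDiff_convolution_right _ hE hψ.1,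
    (isCompact_closedBall x _).of_isClosed_subset (isClosed_tsupport _) hsupp, hsupp.trans hD⟩

end ConvolutionSmooth

/-! ### Interior regularity by a parametrix -/

/-- `g` is a fundamental solution of the Laplacian in `D` with pole `x`: it is smooth in
`D \ {x}` and `Δ g` is the Dirac mass at `x`, in the sense of distributions on `D`. -/
structure IsFundamentalSolution (D : Set ℝ^n) (x : ℝ^n) (g : ℝ^n → ℝ) : Prop where
  integrableOn : IntegrableOn g D
  contDiffOn : ContDiffOn ℝ (⊤ : ℕ∞) g (D \ {x})
  integral_mul_laplacian : ∀ φ : ℝ^n → ℝ, IsTestFun D φ → ∫ y in D, g y * Δ φ y = φ x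

lemma IsTestFun.mul_left_of_eventuallyEq_zero {Ω : Set ℝ^n} {x : ℝ^n} {g ψ : ℝ^n → ℝ}
    (hψ : IsTestFun Ω ψ) (hΩ : IsOpen Ω) (hg : ContDiffOn ℝ (⊤ : ℕ∞) g (Ω \ {x}))
    (hψx : ψ =ᶠ[𝓝 x] fun _ => 0) : IsTestFun Ω (g * ψ) := by
  refine ⟨contDiff_iff_contDiffAt.2 fun y => ?_, hψ.2.1.mul_left,
    tsupport_mul_subset_right.trans hψ.2.2⟩
  have of_locally_zero (h : ψ =ᶠ[𝓝 y] fun _ => 0) : ContDiffAt ℝ (⊤ : ℕ∞) (g * ψ) y :=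
    contDiffAt_const (c := (0 : ℝ)).congr_of_eventuallyEq <| by
      filter_upwards [h] with z hz
      rw [Pi.mul_apply, hz, mul_zero]
  rcases eq_or_ne y x with rfl | hyx
  · exact of_locally_zero hψx
  by_cases hyΩ : y ∈ Ω
  · exact (hg.contDiffAt ((hΩ.sdiff isClosed_singleton).mem_nhds ⟨hyΩ, hyx⟩)).mul
      hψ.1.contDiffAt
  · exact of_locally_zero (notMem_tsupport_iff_eventuallyEq.1 fun h => hyΩ (hψ.2.2 h))

namespace IsFundamentalSolution

variable {D Ω : Set ℝ^n} {x : ℝ^n} {g η φ : ℝ^n → ℝ}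

lemma mono (hg : IsFundamentalSolution D x g) (hΩ : Ω ⊆ D) : IsFundamentalSolution Ω x g where
  integrableOn := hg.integrableOn.mono_set hΩ
  contDiffOn := hg.contDiffOn.mono (sdiff_subset_sdiff_left hΩ)
  integral_mul_laplacian φ hφ := by
    rw [hφ.laplacian.setIntegral_mul, ← (hφ.mono hΩ).laplacian.setIntegral_mul,
      hg.integral_mul_laplacian φ (hφ.mono hΩ)]

lemma isTestFun_mul_partialDeriv (hg : IsFundamentalSolution Ω x g) (hΩ : IsOpen Ω)
    (hη : IsTestFun Ω η) (hη1 : η =ᶠ[𝓝 x] fun _ => 1) (i : Fin n) :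
    IsTestFun Ω (g * partialDeriv i η) :=
  (hη.partialDeriv i).mul_left_of_eventuallyEq_zero hΩ hg.contDiffOn
    (partialDeriv_eventuallyEq_zero hη1 i)

lemma isTestFun_mul_laplacian (hg : IsFundamentalSolution Ω x g) (hΩ : IsOpen Ω)
    (hη : IsTestFun Ω η) (hη1 : η =ᶠ[𝓝 x] fun _ => 1) : IsTestFun Ω (g * Δ η) := by
  rw [hη.laplacian_eq, Finset.mul_sum]
  exact (testFunctions Ω).sum_mem fun i _ =>
    ((hη.partialDeriv i).partialDeriv i).mul_left_of_eventuallyEq_zero hΩ hg.contDiffOn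
      (partialDeriv_eventuallyEq_zero (partialDeriv_eventuallyEq_zero hη1 i) i)

lemma integral_cutoff_mul_laplacian (hg : IsFundamentalSolution Ω x g) (hΩ : IsOpen Ω)
    (hη : IsTestFun Ω η) (hη1 : η =ᶠ[𝓝 x] fun _ => 1) (hφ : ContDiff ℝ (⊤ : ℕ∞) φ) :
    φ x = (∫ y, η y * g y * Δ φ y) +
      (2 * (∫ y, ∑ i, (g * partialDeriv i η) y * partialDeriv i φ y) +
        ∫ y, (g * Δ η) y * φ y) := by
  have int_main : Integrable fun y => η y * g y * Δ φ y := by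
    refine (memLp_one_iff_integrable.1 <| (hη.mul_right (contDiff_laplacian hφ)).memLp_mul
      hΩ.measurableSet (memLp_one_iff_integrable.2 hg.integrableOn)).congr (ae_of_all _ fun y => ?_)
    simp only [Pi.mul_apply]
    ring
  have int_cross : Integrable fun y => ∑ i, (g * partialDeriv i η) y * partialDeriv i φ y :=
    integrable_finsetSum _ fun i _ =>
      ((hg.isTestFun_mul_partialDeriv hΩ hη hη1 i).mul_right
        (contDiff_partialDeriv hφ i)).integrable _
  have int_Δη : Integrable fun y => (g * Δ η) y * φ y :=
    ((hg.isTestFun_mul_laplacian hΩ hη hη1).mul_right hφ).integrable _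
  have leibniz (y : ℝ^n) : g y * Δ (η * φ) y = η y * g y * Δ φ y +
      (2 * ∑ i, (g * partialDeriv i η) y * partialDeriv i φ y + (g * Δ η) y * φ y) := by
    have hη2 : ContDiff ℝ 2 η := mod_cast contDiff_infty.1 hη.1 2
    rw [laplacian_mul hη2 (mod_cast contDiff_infty.1 hφ 2)]
    simp only [Pi.add_apply, Pi.mul_apply, Pi.ofNat_apply, Finset.sum_apply, mul_assoc (g y),
      ← Finset.mul_sum]
    ring
  calc φ x = ∫ y in Ω, g y * Δ (η * φ) y := by
        rw [hg.integral_mul_laplacian _ (hη.mul_right hφ), Pi.mul_apply, hη1.self_of_nhds, one_mul]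
    _ = ∫ y, g y * Δ (η * φ) y := (hη.mul_right hφ).laplacian.setIntegral_mul _
    _ = _ := by
        simp_rw [leibniz]
        rw [integral_add int_main (by exact (int_cross.const_mul 2).add int_Δη),
          integral_add (int_cross.const_mul 2) int_Δη, integral_const_mul]

lemma exists_integral_cutoff_mul_laplacian (hg : IsFundamentalSolution Ω x g) (hΩ : IsOpen Ω)
    (hη : IsTestFun Ω η) (hη1 : η =ᶠ[𝓝 x] fun _ => 1) :
    ∃ r, IsTestFun Ω r ∧ ∀ φ : ℝ^n → ℝ, ContDiff ℝ (⊤ : ℕ∞) φ →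
      ∫ y, η y * g y * Δ φ y = φ x + ∫ y, r y * φ y := by
  have hV := hg.isTestFun_mul_partialDeriv hΩ hη hη1
  have hΔη := hg.isTestFun_mul_laplacian hΩ hη hη1
  set divV : ℝ^n → ℝ := ∑ i, partialDeriv i (g * partialDeriv i η)
  have hdiv : IsTestFun Ω divV := (testFunctions Ω).sum_mem fun i _ => (hV i).partialDeriv i
  refine ⟨(2 : ℝ) • divV - g * Δ η,
    (testFunctions Ω).sub_mem ((testFunctions Ω).smul_mem 2 hdiv) hΔη, fun φ hφ => ?_⟩
  have hr : ∫ y, ((2 : ℝ) • divV - g * Δ η) y * φ y =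
      2 * (∫ y, divV y * φ y) - ∫ y, (g * Δ η) y * φ y := by
    have int_div : Integrable fun y => divV y * φ y := (hdiv.mul_right hφ).integrable _
    have int_Δη : Integrable fun y => (g * Δ η) y * φ y := (hΔη.mul_right hφ).integrable _
    rw [← integral_const_mul, ← integral_sub (int_div.const_mul 2) int_Δη]
    simp only [Pi.sub_apply, Pi.smul_apply, smul_eq_mul, sub_mul, mul_assoc]
  have hpole := hg.integral_cutoff_mul_laplacian hΩ hη hη1 hφ
  rw [IsTestFun.integral_sum_mul_partialDeriv hV hφ] at hpole
  linarith

end IsFundamentalSolution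

/-- A parametrix of the Laplacian at scale `δ`: convolution with `E` inverts `Δ` up to
convolution with the smooth kernel `R`, and both kernels live in the ball of radius `δ`, so
that they only see data within distance `δ`. -/
structure IsParametrix (δ : ℝ) (E R : ℝ^n → ℝ) : Prop where
  pos : 0 < δ
  integrable : Integrable E
  support_subset : Function.support E ⊆ ball 0 δ
  isTestFun : IsTestFun (ball 0 δ) R
  convolution_laplacian : ∀ ψ, IsTestFun univ ψ → E ⋆ Δ ψ = ψ + R ⋆ ψ

lemma convolution_comp_sub_left_apply (e ψ : ℝ^n → ℝ) (x y : ℝ^n) :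
    ((fun t => e (x - t)) ⋆ ψ) y = ∫ z, e z * ψ (y - x + z) := by
  rw [convolution_def, ← integral_sub_left_eq_self _ volume x]
  refine integral_congr_ae (ae_of_all _ fun z => ?_)
  simp [sub_add]

theorem IsFundamentalSolution.exists_isParametrix {D : Set ℝ^n} {x : ℝ^n} {g : ℝ^n → ℝ}
    (hg : IsFundamentalSolution D x g) (hD : IsOpen D) (hx : x ∈ D) {p : ℝ≥0∞}
    (hgp : MemLp g p (volume.restrict D)) {δ : ℝ} (hδ : 0 < δ) :
    ∃ E R : ℝ^n → ℝ, IsParametrix δ E R ∧ MemLp E p := by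
  set Ω := D ∩ ball x δ
  have hΩ : IsOpen Ω := hD.inter isOpen_ball
  have hΩD : Ω ⊆ D := inter_subset_left
  obtain ⟨ρ, hρ, hρΩ⟩ := nhds_basis_closedBall.mem_iff.1 (hΩ.mem_nhds ⟨hx, mem_ball_self hδ⟩)
  let η : ContDiffBump x := ⟨ρ / 2, ρ, half_pos hρ, half_lt_self hρ⟩
  have hη : IsTestFun Ω η := ⟨η.contDiff, η.hasCompactSupport, η.tsupport_eq ▸ hρΩ⟩
  obtain ⟨r, hr, hηr⟩ := (hg.mono hΩD).exists_integral_cutoff_mul_laplacian hΩ hη η.eventuallyEq_one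
  have reflect : MeasurePreserving (x - ·) volume volume := volume.measurePreserving_sub_left x
  have hηg {s : ℝ≥0∞} (hgs : MemLp g s (volume.restrict D)) : MemLp (fun t => (η * g) (x - t)) s :=
    (hη.memLp_mul hΩ.measurableSet (hgs.mono_measure (Measure.restrict_mono_set _ hΩD)))
      |>.comp_measurePreserving reflect
  have hball : (x - ·) ⁻¹' Ω ⊆ ball 0 δ := fun t ht => by simpa using ht.2
  refine ⟨fun t => (η * g) (x - t), fun t => r (x - t), ⟨hδ,
    memLp_one_iff_integrable.1 (hηg (memLp_one_iff_integrable.2 hg.integrableOn)),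
    fun t ht => hball ?_, (hr.comp_sub_left x).mono hball, fun ψ hψ => ?_⟩, hηg hgp⟩
  · by_contra htΩ
    exact ht (mul_eq_zero_of_left (hη.eq_zero htΩ) _)
  · ext y
    rw [Pi.add_apply, convolution_comp_sub_left_apply, convolution_comp_sub_left_apply]
    simp_rw [← laplacian_comp_add_left ψ (y - x)]
    simpa using hηr (fun z => ψ (y - x + z)) (hψ.1.comp (contDiff_const.add contDiff_id))

/-- `Δ v = g` in the sense of distributions on `D`. -/
def HasDistribLaplacian (D : Set ℝ^n) (v g : ℝ^n → ℝ) : Prop :=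
  ∀ φ, IsTestFun D φ → ∫ y, v y * Δ φ y = ∫ y, g y * φ y

namespace HasDistribLaplacian

variable {D : Set ℝ^n} {v g E R : ℝ^n → ℝ} {x : ℝ^n} {δ : ℝ}

lemma integral_mul_testFun (h : HasDistribLaplacian D v g) (hP : IsParametrix δ E R)
    (hv : Integrable v) (hg : Integrable g) (hx : closedBall x (δ + δ) ⊆ D) {ψ : ℝ^n → ℝ}
    (hψ : IsTestFun (ball x δ) ψ) :
    (∫ y, v y * ψ y) + ∫ y, ((fun t => R (-t)) ⋆ v) y * ψ y =
      ∫ y, ((fun t => E (-t)) ⋆ g) y * ψ y := by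
  have hR := hP.isTestFun.integrable volume
  have hRψ : IsTestFun D (R ⋆ ψ) := hψ.convolution hP.pos hP.pos hR.locallyIntegrable
    ((subset_tsupport R).trans hP.isTestFun.2.2) hx
  have hEψ : IsTestFun D (E ⋆ ψ) :=
    hψ.convolution hP.pos hP.pos hP.integrable.locallyIntegrable hP.support_subset hx
  have hvφ {φ : ℝ^n → ℝ} {Ω : Set ℝ^n} (hφ : IsTestFun Ω φ) : Integrable fun y => v y * φ y :=
    have ⟨C, hC⟩ := hφ.2.1.exists_bound_of_continuous hφ.1.continuous
    hv.mul_bdd (c := C) hφ.1.continuous.aestronglyMeasurable (ae_of_all _ hC)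
  obtain ⟨C, hC⟩ := hψ.2.1.exists_bound_of_continuous hψ.1.continuous
  have hψm : AEStronglyMeasurable ψ := hψ.1.continuous.aestronglyMeasurable
  calc (∫ y, v y * ψ y) + ∫ y, ((fun t => R (-t)) ⋆ v) y * ψ y
      = (∫ y, v y * ψ y) + ∫ y, v y * (R ⋆ ψ) y := by
        rw [integral_mul_convolution hR hv hψm hC]
    _ = ∫ y, v y * Δ (E ⋆ ψ) y := by
        rw [← integral_add (hvφ hψ) (hvφ hRψ),
          hψ.laplacian_convolution hP.integrable.locallyIntegrable,
          hP.convolution_laplacian ψ (hψ.mono (subset_univ _))]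
        simp only [Pi.add_apply, mul_add]
    _ = ∫ y, g y * (E ⋆ ψ) y := h _ hEψ
    _ = ∫ y, ((fun t => E (-t)) ⋆ g) y * ψ y := integral_mul_convolution hP.integrable hg hψm hC

lemma ae_eq_convolution (h : HasDistribLaplacian D v g) (hP : IsParametrix δ E R)
    (hv : Integrable v) (hg : Integrable g) (hx : closedBall x (δ + δ) ⊆ D) :
    ∀ᵐ s, s ∈ ball x δ →
      v s = ((fun t => E (-t)) ⋆ g) s - ((fun t => R (-t)) ⋆ v) s := by
  have hEg : Integrable ((fun t => E (-t)) ⋆ g) :=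
    hP.integrable.comp_neg.integrable_convolution _ hg
  have hRv : Integrable ((fun t => R (-t)) ⋆ v) :=
    (hP.isTestFun.integrable volume).comp_neg.integrable_convolution _ hv
  have hweak := isOpen_ball.ae_eq_zero_of_integral_contDiff_smul_eq_zero (U := ball x δ)
    (μ := volume) (f := v + (fun t => R (-t)) ⋆ v - (fun t => E (-t)) ⋆ g)
    (((hv.add hRv).sub hEg).locallyIntegrable.locallyIntegrableOn _) fun ψ hψ hψc hψx => ?_
  · filter_upwards [hweak] with s hs hsx
    exact eq_sub_of_add_eq (sub_eq_zero.1 (hs hsx))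
  obtain ⟨C, hC⟩ := hψc.exists_bound_of_continuous hψ.continuous
  have hmul {k : ℝ^n → ℝ} (hk : Integrable k) : Integrable fun y => k y * ψ y :=
    hk.mul_bdd hψ.continuous.aestronglyMeasurable (ae_of_all _ hC)
  simp_rw [smul_eq_mul, mul_comm (ψ _), Pi.sub_apply, Pi.add_apply, sub_mul, add_mul]
  rw [integral_sub (by exact (hmul hv).add (hmul hRv)) (hmul hEg),
    integral_add (hmul hv) (hmul hRv),
    h.integral_mul_testFun hP hv hg hx ⟨hψ, hψc, hψx⟩, sub_self]

theorem exists_contDiff_ae_eq (h : HasDistribLaplacian D v g) (hP : IsParametrix δ E R)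
    (hv : Integrable v) {Ω : Set ℝ^n} (hg : IsTestFun Ω g) (hx : closedBall x (δ + δ) ⊆ D) :
    ∃ w : ℝ^n → ℝ, ContDiff ℝ (⊤ : ℕ∞) w ∧ ∀ᵐ s, s ∈ ball x δ → v s = w s := by
  refine ⟨_, .sub ?_ ?_, h.ae_eq_convolution hP hv (hg.integrable _) hx⟩
  · exact hg.2.1.contDiff_convolution_right _ hP.integrable.comp_neg.locallyIntegrable hg.1
  · exact (hP.isTestFun.2.1.comp_homeomorph (Homeomorph.neg _)).contDiff_convolution_left _
      (hP.isTestFun.1.comp contDiff_neg) hv.locallyIntegrable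

theorem enorm_apply_le (h : HasDistribLaplacian D v g) (hP : IsParametrix δ E R) {p q : ℝ≥0∞}
    [ENNReal.HolderConjugate p q] (hv : Integrable v) (hg : Integrable g)
    (hx : closedBall x (δ + δ) ⊆ D) (hvx : ContinuousAt v x) :
    ‖v x‖ₑ ≤ eLpNorm E p * eLpNorm g q + eLpNorm R 2 * eLpNorm v 2 := by
  have hneg : MeasurePreserving (-·) (volume : Measure ℝ^n) volume := volume.measurePreserving_neg
  have hE := hP.integrable.aestronglyMeasurable
  have hR := (hP.isTestFun.integrable volume).aestronglyMeasurable
  have hbound : ∀ᵐ s, s ∈ ball x δ →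
      ‖v s‖ₑ ≤ eLpNorm E p * eLpNorm g q + eLpNorm R 2 * eLpNorm v 2 := by
    filter_upwards [h.ae_eq_convolution hP hv hg hx] with s hs hsx
    rw [hs hsx, ← eLpNorm_comp_measurePreserving hE hneg, ← eLpNorm_comp_measurePreserving hR hneg]
    exact (enorm_sub_le).trans <| add_le_add
      (enorm_convolution_le (hE.comp_measurePreserving hneg) hg.1 s)
      (enorm_convolution_le (hR.comp_measurePreserving hneg) hv.1 s)
  have hfreq := (mem_closure_iff_frequently.1 (Measure.dense_of_ae hbound x)).and_eventually
    (ball_mem_nhds x hP.pos)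
  exact le_of_tendsto_of_frequently hvx.enorm (hfreq.mono fun s hs => hs.1 hs.2)

end HasDistribLaplacian

/-! ### Sobolev inequalities for test functions -/

lemma enorm_gradient (φ : ℝ^n → ℝ) (x : ℝ^n) : ‖∇ φ x‖ₑ = ‖fderiv ℝ φ x‖ₑ := by
  rw [gradient, LinearIsometryEquiv.enorm_map]

lemma exists_eLpNorm_le_mul_eLpNorm_of_exponent_le {α : Type*} [MeasurableSpace α] (μ : Measure α)
    [IsFiniteMeasure μ] {p q : ℝ≥0∞} (hpq : p ≤ q) (F : Type*) [NormedAddCommGroup F] :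
    ∃ C ≠ ∞, ∀ f : α → F, AEStronglyMeasurable f μ → eLpNorm f p μ ≤ C * eLpNorm f q μ := by
  rcases eq_or_ne p 0 with rfl | hp
  · exact ⟨0, ENNReal.zero_ne_top, by simp⟩
  refine ⟨μ univ ^ (1 / p.toReal - 1 / q.toReal), ENNReal.rpow_ne_top_of_nonneg ?_
    (measure_ne_top _ _), fun f hf => mul_comm (eLpNorm f q μ) _ ▸
      eLpNorm_le_eLpNorm_mul_rpow_measure_univ hpq hf⟩
  rcases eq_or_ne q ∞ with rfl | hq
  · simp
  · exact sub_nonneg.2 <| one_div_le_one_div_of_le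
      (ENNReal.toReal_pos hp (ne_top_of_le_ne_top hq hpq)) (ENNReal.toReal_mono hq hpq)

namespace IsTestFun

lemma enorm_apply_le_lintegral_gradient {D : Set ℝ^n} {φ : ℝ^n → ℝ} (hφ : IsTestFun D φ)
    (x : ℝ^n) {e : ℝ^n} (he : ‖e‖ = 1) : ‖φ x‖ₑ ≤ ∫⁻ t : ℝ, ‖∇ φ (x + t • e)‖ₑ := by
  have hline (t : ℝ) : HasDerivAt (fun t : ℝ => x + t • e) e t := by
    simpa using ((hasDerivAt_id t).smul_const e).const_add x
  have hcompact : HasCompactSupport fun t : ℝ => φ (x + t • e) :=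
    hφ.2.1.comp_isClosedEmbedding <| (Homeomorph.addLeft x).isClosedEmbedding.comp <|
      isClosedEmbedding_smul_left (norm_ne_zero_iff.1 (he ▸ one_ne_zero))
  have hsmooth : ContDiff ℝ 1 fun t : ℝ => φ (x + t • e) :=
    ContDiff.comp (g := φ) (mod_cast contDiff_infty.1 hφ.1 1)
      (contDiff_const.add (contDiff_id.smul contDiff_const))
  calc ‖φ x‖ₑ ≤ ∫⁻ t in Iic (0 : ℝ), ‖deriv (fun t : ℝ => φ (x + t • e)) t‖ₑ := by
        simpa using hcompact.enorm_le_lintegral_Ici_deriv hsmooth 0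
    _ ≤ ∫⁻ t, ‖deriv (fun t : ℝ => φ (x + t • e)) t‖ₑ := setLIntegral_le_lintegral _ _
    _ ≤ ∫⁻ t : ℝ, ‖∇ φ (x + t • e)‖ₑ := by
        refine lintegral_mono fun t => ?_
        have hderiv : HasDerivAt (fun t : ℝ => φ (x + t • e)) (fderiv ℝ φ (x + t • e) e) t :=
          (hφ.differentiable _).hasFDerivAt.comp_hasDerivAt t (hline t)
        rw [hderiv.deriv, enorm_gradient, enorm_le_iff_norm_le]
        simpa [he] using (fderiv ℝ φ (x + t • e)).le_opNorm e

lemma eLpNorm_restrict_gradient {D : Set ℝ^n} {φ : ℝ^n → ℝ} (hφ : IsTestFun D φ) (p : ℝ≥0∞) :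
    eLpNorm (∇ φ) p (volume.restrict D) = eLpNorm (∇ φ) p :=
  eLpNorm_restrict_eq_of_support_subset fun _ hx => by_contra fun h => hx (hφ.gradient_eq_zero h)

lemma eLpNorm_top_le_eLpNorm_gradient {D : Set ℝ^1} {φ : ℝ^1 → ℝ} (hφ : IsTestFun D φ) :
    eLpNorm φ ∞ ≤ eLpNorm (∇ φ) 1 := by
  have he : ‖(EuclideanSpace.single 0 1 : ℝ^1)‖ = 1 := by simp
  have hmp : MeasurePreserving (fun t : ℝ => t • (EuclideanSpace.single 0 1 : ℝ^1)) := by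
    have hcoord : MeasurePreserving (WithLp.toLp 2 ∘ (MeasurableEquiv.funUnique (Fin 1) ℝ).symm) :=
      (PiLp.volume_preserving_toLp (Fin 1)).comp ((volume_preserving_funUnique (Fin 1) ℝ).symm _)
    have heq : WithLp.toLp 2 ∘ (MeasurableEquiv.funUnique (Fin 1) ℝ).symm =
        fun t : ℝ => t • (EuclideanSpace.single 0 1 : ℝ^1) := by
      refine funext fun t => PiLp.ext fun i => ?_
      simp [Subsingleton.elim i 0]
    exact heq ▸ hcoord
  refine eLpNormEssSup_le_of_ae_enorm_bound (ae_of_all _ fun x => ?_)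
  refine (hφ.enorm_apply_le_lintegral_gradient x he).trans_eq ?_
  rw [eLpNorm_one_eq_lintegral_enorm, ← lintegral_add_left_eq_self _ x]
  exact hmp.lintegral_comp (f := fun y => ‖∇ φ (x + y)‖ₑ)
    (((continuous_gradient (mod_cast contDiff_infty.1 hφ.1 1)).measurable.comp
      (measurable_const_add x)).enorm)

end IsTestFun

section Embedding

variable {D : Set ℝ^n}

lemma exists_sobolev_exponent (hn : 2 ≤ n) :
    ∃ s : ℝ≥0, 1 ≤ s ∧ s ≤ 2 ∧ s < n ∧ (s : ℝ)⁻¹ - (n : ℝ)⁻¹ ≤ 2⁻¹ := by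
  have hn' : (2 : ℝ≥0) ≤ n := mod_cast hn
  -- `2n / (n + 2)` is the exponent with Sobolev conjugate `2`.
  refine ⟨2 * n / (n + 2), ?_, ?_, ?_, ?_⟩
  · rw [one_le_div₀ (by positivity), two_mul]
    gcongr
  · rw [div_le_iff₀ (by positivity)]
    gcongr
    exact le_self_add
  · rw [div_lt_iff₀ (by positivity), mul_add, mul_comm]
    exact lt_add_of_pos_left _ (by positivity)
  · push_cast
    field_simp
    ring_nf
    rfl

lemma exists_eLpNorm_two_le_eLpNorm_gradient_of_two_le (hD : IsBounded D) (hn : 2 ≤ n) :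
    ∃ C ≠ ∞, ∀ φ, IsTestFun D φ →
      eLpNorm φ 2 (volume.restrict D) ≤ C * eLpNorm (∇ φ) 2 (volume.restrict D) := by
  have : IsFiniteMeasure (volume.restrict D) := isFiniteMeasure_restrict.2 hD.measure_lt_top.ne
  obtain ⟨s, hs1, hs2, hsn, hs⟩ := exists_sobolev_exponent hn
  obtain ⟨C, hC, hCs⟩ := exists_eLpNorm_le_mul_eLpNorm_of_exponent_le (volume.restrict D)
    (show (s : ℝ≥0∞) ≤ 2 by simpa using ENNReal.coe_le_coe.2 hs2) ℝ^n
  refine ⟨eLpNormLESNormFDerivOfLeConst ℝ volume D s 2 * C,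
    ENNReal.mul_ne_top ENNReal.coe_ne_top hC, fun φ hφ => ?_⟩
  have hsupp : Function.support φ ⊆ D := (subset_tsupport φ).trans hφ.2.2
  have gagliardo_nirenberg := eLpNorm_le_eLpNorm_fderiv_of_le volume (p := s) (q := 2)
    (mod_cast contDiff_infty.1 hφ.1 1 : ContDiff ℝ 1 φ) hsupp hs1 (by simpa using hsn)
    (by simpa using hs) hD
  rw [← eLpNorm_congr_enorm_ae (ae_of_all _ (enorm_gradient φ)), ← hφ.eLpNorm_restrict_gradient,
    ENNReal.coe_ofNat] at gagliardo_nirenberg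
  refine (eLpNorm_restrict_le φ 2 volume D).trans <| gagliardo_nirenberg.trans ?_
  rw [mul_assoc]
  gcongr
  exact hCs _ (hφ.memLp_gradient s _).1

lemma exists_eLpNorm_le_eLpNorm_gradient (hD : IsBounded D) (hn : n ≠ 0) {p : ℝ≥0∞}
    (hp : p ≤ 2 ∨ n = 1) : ∃ C ≠ ∞, ∀ φ, IsTestFun D φ →
      eLpNorm φ p (volume.restrict D) ≤ C * eLpNorm (∇ φ) 2 (volume.restrict D) := by
  have : IsFiniteMeasure (volume.restrict D) := isFiniteMeasure_restrict.2 hD.measure_lt_top.ne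
  rcases eq_or_ne n 1 with rfl | hn1
  · obtain ⟨A, hA, hAp⟩ := exists_eLpNorm_le_mul_eLpNorm_of_exponent_le (volume.restrict D)
      (le_top : p ≤ ∞) ℝ
    obtain ⟨B, hB, hB2⟩ := exists_eLpNorm_le_mul_eLpNorm_of_exponent_le (volume.restrict D)
      one_le_two ℝ^1
    refine ⟨A * B, ENNReal.mul_ne_top hA hB, fun φ hφ => ?_⟩
    calc eLpNorm φ p (volume.restrict D) ≤ A * eLpNorm φ ∞ (volume.restrict D) :=
          hAp φ (hφ.memLp p _).1
      _ ≤ A * eLpNorm (∇ φ) 1 (volume.restrict D) := by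
          gcongr
          rw [hφ.eLpNorm_restrict_gradient]
          exact (eLpNorm_restrict_le _ _ _ _).trans hφ.eLpNorm_top_le_eLpNorm_gradient
      _ ≤ A * (B * eLpNorm (∇ φ) 2 (volume.restrict D)) := by
          gcongr
          exact hB2 _ (hφ.memLp_gradient 1 _).1
      _ = A * B * eLpNorm (∇ φ) 2 (volume.restrict D) := (mul_assoc _ _ _).symm
  · obtain ⟨A, hA, hAp⟩ := exists_eLpNorm_le_mul_eLpNorm_of_exponent_le (volume.restrict D)
      (hp.resolve_right hn1) ℝ
    obtain ⟨B, hB, hB2⟩ := exists_eLpNorm_two_le_eLpNorm_gradient_of_two_le hD (by omega)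
    exact ⟨A * B, ENNReal.mul_ne_top hA hB, fun φ hφ =>
      (hAp φ (hφ.memLp p _).1).trans (by rw [mul_assoc]; gcongr; exact hB2 φ hφ)⟩

end Embedding

/-! ### The space `W^{1,2}_0` as a Hilbert space -/

section SobolevSpace

/-- The Hilbert space `L²(D) × L²(D; ℝⁿ)`, in which a Sobolev function `u` is recorded as the pair
`(u, ∇u)`. -/
abbrev L2Pair (D : Set ℝ^n) : Type :=
  WithLp 2 (Lp ℝ 2 (volume.restrict D) × Lp ℝ^n 2 (volume.restrict D))

variable {D : Set ℝ^n} {z : L2Pair D}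

/-- The graph map `φ ↦ (φ, ∇φ)` of the gradient on test functions. -/
def gradientGraph (D : Set ℝ^n) : testFunctions D →ₗ[ℝ] L2Pair D where
  toFun φ := WithLp.toLp 2 ((φ.2.memLp 2 _).toLp φ.1, (φ.2.memLp_gradient 2 _).toLp (∇ φ.1))
  map_add' φ ψ := by
    have hgrad : ∇ (φ + ψ : ℝ^n → ℝ) = ∇ φ.1 + ∇ ψ.1 := by
      ext x i
      simp [gradient_apply, partialDeriv_add i (φ.2.differentiable x) (ψ.2.differentiable x)]
    rw [← WithLp.toLp_add, Prod.mk_add_mk, ← MemLp.toLp_add, ← MemLp.toLp_add]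
    simp only [Submodule.coe_add, hgrad]
  map_smul' c φ := by
    have hgrad : ∇ (c • φ : ℝ^n → ℝ) = c • ∇ φ.1 := by
      ext x i
      simp [gradient_apply, partialDeriv, fderiv_const_smul (φ.2.differentiable x)]
    rw [RingHom.id_apply, ← WithLp.toLp_smul, Prod.smul_mk, ← MemLp.toLp_const_smul,
      ← MemLp.toLp_const_smul]
    simp only [Submodule.coe_smul, hgrad]

lemma fst_gradientGraph (φ : testFunctions D) :
    (gradientGraph D φ).fst =ᵐ[volume.restrict D] φ.1 :=
  (φ.2.memLp 2 _).coeFn_toLp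

lemma snd_gradientGraph (φ : testFunctions D) :
    (gradientGraph D φ).snd =ᵐ[volume.restrict D] ∇ φ.1 :=
  (φ.2.memLp_gradient 2 _).coeFn_toLp

/-- The space `W^{1,2}_0(D)`, encoded as the closure in `L²(D) × L²(D; ℝⁿ)` of the pairs `(φ, ∇φ)`
with `φ` a test function. The second component of an element is the weak gradient of the first. -/
def sobolevZero (D : Set ℝ^n) : Submodule ℝ (L2Pair D) :=
  (LinearMap.range (gradientGraph D)).topologicalClosure

instance : CompleteSpace (sobolevZero D) :=
  (Submodule.isClosed_topologicalClosure _).completeSpace_coe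

lemma gradientGraph_mem_sobolevZero (φ : testFunctions D) : gradientGraph D φ ∈ sobolevZero D :=
  Submodule.le_topologicalClosure _ ⟨φ, rfl⟩

lemma sobolevZero_induction {P : L2Pair D → Prop} (hP : IsClosed {z | P z})
    (h : ∀ φ, P (gradientGraph D φ)) (hz : z ∈ sobolevZero D) : P z :=
  closure_minimal (by rintro _ ⟨φ, rfl⟩; exact h φ) hP hz

lemma tendsto_gradientGraph_iff {u : ℝ^n → ℝ} {U : ℝ^n → ℝ^n} (hu : z.fst =ᵐ[volume.restrict D] u)
    (hU : z.snd =ᵐ[volume.restrict D] U) {φ : ℕ → testFunctions D} :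
    Tendsto (fun k => gradientGraph D (φ k)) atTop (𝓝 z) ↔
      Tendsto (fun k => eLpNorm (fun x => u x - (φ k).1 x) 2 (volume.restrict D) +
        eLpNorm (fun x => U x - ∇ (φ k).1 x) 2 (volume.restrict D)) atTop (𝓝 0) := by
  have edist_fst (k) : edist (gradientGraph D (φ k)).fst z.fst =
      eLpNorm (fun x => u x - (φ k).1 x) 2 (volume.restrict D) := by
    rw [edist_comm, Lp.edist_def]
    exact eLpNorm_congr_ae (hu.sub (fst_gradientGraph _))
  have edist_snd (k) : edist (gradientGraph D (φ k)).snd z.snd =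
      eLpNorm (fun x => U x - ∇ (φ k).1 x) 2 (volume.restrict D) := by
    rw [edist_comm, Lp.edist_def]
    exact eLpNorm_congr_ae (hU.sub (snd_gradientGraph _))
  simp_rw [← edist_fst, ← edist_snd]
  have tendsto_iff : Tendsto (fun k => gradientGraph D (φ k)) atTop (𝓝 z) ↔
      Tendsto (fun k => ((gradientGraph D (φ k)).fst, (gradientGraph D (φ k)).snd)) atTop
        (𝓝 (z.fst, z.snd)) :=
    (WithLp.homeomorphProd 2 _ _).isInducing.tendsto_nhds_iff
  rw [tendsto_iff, Prod.tendsto_iff, tendsto_iff_edist_tendsto_0, tendsto_iff_edist_tendsto_0]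
  refine ⟨fun ⟨h₁, h₂⟩ => by simpa using h₁.add h₂, fun h => ⟨?_, ?_⟩⟩
  · exact tendsto_of_tendsto_of_tendsto_of_le_of_le tendsto_const_nhds h (fun _ => zero_le)
      fun _ => le_self_add
  · exact tendsto_of_tendsto_of_tendsto_of_le_of_le tendsto_const_nhds h (fun _ => zero_le)
      fun _ => le_add_self

lemma memW120_iff {u : ℝ^n → ℝ} : MemW120 D u ↔
    ∃ z ∈ sobolevZero D, z.fst =ᵐ[volume.restrict D] u ∧ z.snd =ᵐ[volume.restrict D] ∇ u := by
  constructor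
  · rintro ⟨⟨hu, hU⟩, φ, hφ, hlim⟩
    refine ⟨WithLp.toLp 2 (hu.toLp u, hU.toLp _), ?_, hu.coeFn_toLp, hU.coeFn_toLp⟩
    exact mem_closure_of_tendsto ((tendsto_gradientGraph_iff (φ := fun k => ⟨φ k, hφ k⟩)
      hu.coeFn_toLp hU.coeFn_toLp).2 hlim) (Eventually.of_forall fun k => ⟨_, rfl⟩)
  · rintro ⟨z, hz, hu, hU⟩
    obtain ⟨w, hw, hlim⟩ := mem_closure_iff_seq_limit.1 hz
    choose φ hφ using hw
    refine ⟨⟨(memLp_congr_ae hu).1 (Lp.memLp _), (memLp_congr_ae hU).1 (Lp.memLp _)⟩,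
      fun k => (φ k).1, fun k => (φ k).2, ?_⟩
    rw [← funext hφ] at hlim
    exact (tendsto_gradientGraph_iff hu hU).1 hlim

end SobolevSpace

/-! ### Weak gradients -/

section WeakGradient

variable {D : Set ℝ^n} {v w : ℝ^n → ℝ} {V W : ℝ^n → ℝ^n}

/-- `V` is the weak gradient of `v` in `D`. Both functions are meant to be locally integrable
on `D`, so that no integral is given its default value. -/
def HasWeakGradient (D : Set ℝ^n) (v : ℝ^n → ℝ) (V : ℝ^n → ℝ^n) : Prop :=
  ∀ i ψ, IsTestFun D ψ → ∫ x in D, V x i * ψ x = -∫ x in D, v x * partialDeriv i ψ x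

lemma IsTestFun.integrable_mul {ψ : ℝ^n → ℝ} (hψ : IsTestFun D ψ)
    (hv : LocallyIntegrableOn v D) : Integrable fun x => v x * ψ x :=
  (integrableOn_iff_integrable_of_support_subset
      ((Function.support_mul_subset_right v ψ).trans (subset_tsupport ψ))).1
    ((hv.integrableOn_compact_subset hψ.2.2 hψ.2.1).mul_continuousOn
      hψ.1.continuous.continuousOn hψ.2.1)

lemma locallyIntegrableOn_apply (hV : LocallyIntegrableOn V D) (i : Fin n) :
    LocallyIntegrableOn (fun x => V x i) D :=
  ContinuousLinearMap.locallyIntegrableOn_comp (EuclideanSpace.proj i : ℝ^n →L[ℝ] ℝ) hV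

lemma hasWeakGradient_gradient (hD : IsOpen D) (hw : ContDiffOn ℝ 1 w D) :
    HasWeakGradient D w (∇ w) := by
  intro i ψ hψ
  have hdw : ContinuousOn (partialDeriv i w) D :=
    (hw.continuousOn_fderiv_of_isOpen hD le_rfl).clm_apply continuousOn_const
  have hw_loc := hw.continuousOn.locallyIntegrableOn (μ := volume) hD.measurableSet
  have int_mul : Integrable fun x => ψ x * w x := by
    simpa only [mul_comm] using hψ.integrable_mul hw_loc
  have int_deriv_mul : Integrable fun x => partialDeriv i ψ x * w x := by
    simpa only [mul_comm] using (hψ.partialDeriv i).integrable_mul hw_loc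
  have int_mul_deriv : Integrable fun x => ψ x * partialDeriv i w x := by
    simpa only [mul_comm] using hψ.integrable_mul (hdw.locallyIntegrableOn hD.measurableSet)
  rw [hψ.setIntegral_mul, (hψ.partialDeriv i).setIntegral_mul]
  simp only [gradient_apply, mul_comm _ (ψ _), mul_comm (w _)]
  refine integral_mul_fderiv_eq_neg_fderiv_mul_of_integrable int_deriv_mul int_mul_deriv int_mul
    (fun x _ => hψ.differentiable x) fun x hx => ?_
  exact (hw.contDiffAt (hD.mem_nhds (hψ.2.2 hx))).differentiableAt one_ne_zero

namespace HasWeakGradient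

lemma congr_left (hV : HasWeakGradient D v V) (h : v =ᵐ[volume.restrict D] w) :
    HasWeakGradient D w V := fun i ψ hψ => by
  rw [hV i ψ hψ, integral_congr_ae (h.mono fun x hx => by rw [hx])]

lemma ae_eq (hD : IsOpen D) (hV : HasWeakGradient D v V) (hW : HasWeakGradient D v W)
    (hV_int : LocallyIntegrableOn V D) (hW_int : LocallyIntegrableOn W D) :
    V =ᵐ[volume.restrict D] W := by
  have coordinate (i : Fin n) : ∀ᵐ x, x ∈ D → V x i - W x i = 0 := by
    have hVi := locallyIntegrableOn_apply hV_int i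
    have hWi := locallyIntegrableOn_apply hW_int i
    refine hD.ae_eq_zero_of_integral_contDiff_smul_eq_zero (hVi.sub hWi)
      fun ψ hψ₁ hψ₂ hψ₃ => ?_
    have hψ : IsTestFun D ψ := ⟨hψ₁, hψ₂, hψ₃⟩
    calc ∫ x, ψ x • (V x i - W x i)
        = (∫ x, V x i * ψ x) - ∫ x, W x i * ψ x := by
          rw [← integral_sub (hψ.integrable_mul hVi) (hψ.integrable_mul hWi)]
          simp only [smul_eq_mul, mul_comm (ψ _), sub_mul]
      _ = 0 := by
          rw [← hψ.setIntegral_mul, ← hψ.setIntegral_mul fun x => W x i, hV i ψ hψ, hW i ψ hψ,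
            sub_self]
  rw [EventuallyEq, ae_restrict_iff' hD.measurableSet]
  filter_upwards [ae_all_iff.2 coordinate] with x hx hxD
  ext i
  exact sub_eq_zero.1 (hx i hxD)

lemma integral_inner_gradient (hV : HasWeakGradient D v V) (hv_int : LocallyIntegrableOn v D)
    (hV_int : LocallyIntegrableOn V D) {ψ : ℝ^n → ℝ} (hψ : IsTestFun D ψ) :
    ∫ x in D, ⟪V x, ∇ ψ x⟫ = -∫ x in D, v x * Δ ψ x := by
  have int_left (i : Fin n) : IntegrableOn (fun x => V x i * partialDeriv i ψ x) D :=
    ((hψ.partialDeriv i).integrable_mul (locallyIntegrableOn_apply hV_int i)).integrableOn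
  have int_right (i : Fin n) :
      IntegrableOn (fun x => v x * partialDeriv i (partialDeriv i ψ) x) D :=
    (((hψ.partialDeriv i).partialDeriv i).integrable_mul hv_int).integrableOn
  simp_rw [inner_gradient_eq_sum, hψ.laplacian_eq, Finset.sum_apply, Finset.mul_sum]
  rw [integral_finsetSum _ fun i _ => int_left i, integral_finsetSum _ fun i _ => int_right i,
    ← Finset.sum_neg_distrib]
  exact Finset.sum_congr rfl fun i _ => hV i _ (hψ.partialDeriv i)

end HasWeakGradient

lemma continuous_integral_inner {α E : Type*} [MeasurableSpace α] {μ : Measure α}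
    [NormedAddCommGroup E] [InnerProductSpace ℝ E] {f : α → E} (hf : MemLp f 2 μ) :
    Continuous fun g : Lp E 2 μ => ∫ x, ⟪g x, f x⟫ ∂μ := by
  refine (continuous_id.inner (continuous_const (y := hf.toLp f))).congr fun g => ?_
  rw [id, L2.inner_def]
  exact integral_congr_ae (hf.coeFn_toLp.mono fun x hx => by simp only [hx])

lemma hasWeakGradient_of_mem_sobolevZero {z : L2Pair D} (hz : z ∈ sobolevZero D) :
    HasWeakGradient D z.fst z.snd := by
  intro i ψ hψ
  have snd_mul (V : ℝ^n → ℝ^n) (x : ℝ^n) :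
      V x i * ψ x = ⟪V x, ψ x • EuclideanSpace.single i (1 : ℝ)⟫ := by
    simp [inner_smul_right, EuclideanSpace.inner_single_right, mul_comm]
  have fst_mul (v : ℝ^n → ℝ) (x : ℝ^n) : v x * partialDeriv i ψ x = ⟪v x, partialDeriv i ψ x⟫ :=
    mul_comm _ _
  refine sobolevZero_induction
    (P := fun z => ∫ x in D, z.snd x i * ψ x = -∫ x in D, z.fst x * partialDeriv i ψ x)
    ?_ (fun φ => ?_) hz
  · simp_rw [snd_mul, fst_mul]
    refine isClosed_eq ((continuous_integral_inner ?_).comp (WithLp.continuous_snd 2 _ _))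
      ((continuous_integral_inner ((hψ.partialDeriv i).memLp 2 _)).comp
        (WithLp.continuous_fst 2 _ _)).neg
    exact (hψ.1.continuous.smul continuous_const).memLp_of_hasCompactSupport hψ.2.1.smul_right
  · calc ∫ x in D, (gradientGraph D φ).snd x i * ψ x
        = ∫ x in D, ∇ φ.1 x i * ψ x :=
          integral_congr_ae ((snd_gradientGraph φ).mono fun x hx => by simp only [hx])
      _ = -∫ x in D, φ.1 x * partialDeriv i ψ x := by
          simp_rw [gradient_apply]
          rw [hψ.setIntegral_mul, (hψ.partialDeriv i).setIntegral_mul,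
            φ.2.integral_mul_partialDeriv hψ.1, neg_neg]
      _ = -∫ x in D, (gradientGraph D φ).fst x * partialDeriv i ψ x := by
          congr 1
          exact integral_congr_ae ((fst_gradientGraph φ).mono fun x hx => by simp only [hx])

end WeakGradient

/-! ### Weak solutions of the Dirichlet problem -/

lemma exists_inner_snd_eq_inner_fst {H₁ H₂ : Type*} [NormedAddCommGroup H₁]
    [InnerProductSpace ℝ H₁] [NormedAddCommGroup H₂] [InnerProductSpace ℝ H₂]
    (K : Submodule ℝ (WithLp 2 (H₁ × H₂))) [CompleteSpace K] {C : ℝ}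
    (hC : ∀ z ∈ K, ‖z.fst‖ ≤ C * ‖z.snd‖) (f : H₁) :
    ∃ z ∈ K, ∀ w ∈ K, ⟪z.snd, w.snd⟫ = ⟪f, w.fst⟫ := by
  let fstK : K →L[ℝ] H₁ := (WithLp.fstL 2 ℝ _ _).comp K.subtypeL
  let sndK : K →L[ℝ] H₂ := (WithLp.sndL 2 ℝ _ _).comp K.subtypeL
  let B : K →L[ℝ] K →L[ℝ] ℝ := (innerSL ℝ).bilinearComp sndK sndK
  have coercive : IsCoercive B := by
    refine ⟨1 / (C ^ 2 + 1), by positivity, fun z => ?_⟩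
    have norm_sq : ‖z‖ * ‖z‖ = ‖z.1.fst‖ ^ 2 + ‖z.1.snd‖ ^ 2 := by
      rw [← sq, Submodule.coe_norm, WithLp.prod_norm_sq_eq_of_L2]
    have poincare_sq : ‖z.1.fst‖ ^ 2 ≤ (C * ‖z.1.snd‖) ^ 2 := by
      gcongr
      exact hC z.1 z.2
    rw [show B z z = ‖z.1.snd‖ ^ 2 from real_inner_self_eq_norm_sq _, mul_assoc, norm_sq, one_div,
      inv_mul_le_iff₀ (by positivity)]
    linarith
  let z := coercive.continuousLinearEquivOfBilin.symm
    ((InnerProductSpace.toDual ℝ K).symm ((innerSL ℝ f).comp fstK))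
  refine ⟨z.1, z.2, fun w hw => ?_⟩
  change B z ⟨w, hw⟩ = (innerSL ℝ f).comp fstK ⟨w, hw⟩
  rw [← coercive.continuousLinearEquivOfBilin_apply, ContinuousLinearEquiv.apply_symm_apply,
    InnerProductSpace.toDual_symm_apply]

section WeakSolution

variable {D : Set ℝ^n} {f g : ℝ^n → ℝ} {z w : L2Pair D}

/-- `z = (u, ∇u)` is the weak solution of `Δ u = f` with `u ∈ W^{1,2}_0(D)`. -/
structure IsWeakSolution (D : Set ℝ^n) (f : ℝ^n → ℝ) (z : L2Pair D) : Prop where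
  mem : z ∈ sobolevZero D
  integral_inner_gradient : ∀ ψ, IsTestFun D ψ →
    ∫ x in D, ⟪z.snd x, ∇ ψ x⟫ = -∫ x in D, f x * ψ x

lemma memW120_and_weakLapEq_iff {u : ℝ^n → ℝ} : MemW120 D u ∧ WeakLapEq D f u ↔
    ∃ z, IsWeakSolution D f z ∧ z.fst =ᵐ[volume.restrict D] u ∧
      z.snd =ᵐ[volume.restrict D] ∇ u := by
  have integral_congr {z : L2Pair D} (hU : z.snd =ᵐ[volume.restrict D] ∇ u) (ψ : ℝ^n → ℝ) :
      ∫ x in D, ⟪z.snd x, ∇ ψ x⟫ = ∫ x in D, ⟪∇ u x, ∇ ψ x⟫ :=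
    integral_congr_ae (hU.mono fun x hx => by simp only [hx])
  rw [memW120_iff]
  constructor
  · rintro ⟨⟨z, hz, hu, hU⟩, hf⟩
    exact ⟨z, ⟨hz, fun ψ hψ => (integral_congr hU ψ).trans (hf ψ hψ)⟩, hu, hU⟩
  · rintro ⟨z, hz, hu, hU⟩
    exact ⟨⟨z, hz.mem, hu, hU⟩, fun ψ hψ =>
      (integral_congr hU ψ).symm.trans (hz.integral_inner_gradient ψ hψ)⟩

lemma inner_snd_gradientGraph (z : L2Pair D) (φ : testFunctions D) :
    ⟪z.snd, (gradientGraph D φ).snd⟫ = ∫ x in D, ⟪z.snd x, ∇ φ.1 x⟫ := by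
  rw [L2.inner_def]
  exact integral_congr_ae ((snd_gradientGraph φ).mono fun x hx => by simp only [hx])

lemma exists_nnnorm_fst_le (hD : IsBounded D) (hn : n ≠ 0) :
    ∃ C : ℝ≥0, ∀ z ∈ sobolevZero D, ‖z.fst‖₊ ≤ C * ‖z.snd‖₊ := by
  obtain ⟨C, hC, hCφ⟩ := exists_eLpNorm_le_eLpNorm_gradient hD hn (p := 2) (.inl le_rfl)
  lift C to ℝ≥0 using hC
  refine ⟨C, fun z hz => sobolevZero_induction (P := fun z => ‖z.fst‖₊ ≤ C * ‖z.snd‖₊)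
    (isClosed_le ?_ ?_) (fun φ => ?_) hz⟩
  · exact (WithLp.continuous_fst 2 _ _).nnnorm
  · exact continuous_const.mul (WithLp.continuous_snd 2 _ _).nnnorm
  · rw [← ENNReal.coe_le_coe, ENNReal.coe_mul, ← enorm_eq_nnnorm, ← enorm_eq_nnnorm,
      Lp.enorm_def, Lp.enorm_def, eLpNorm_congr_ae (fst_gradientGraph φ),
      eLpNorm_congr_ae (snd_gradientGraph φ)]
    exact hCφ φ.1 φ.2

theorem exists_isWeakSolution (hD : IsBounded D) (hn : n ≠ 0)
    (hf : MemLp f 2 (volume.restrict D)) : ∃ z, IsWeakSolution D f z := by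
  obtain ⟨C, hC⟩ := exists_nnnorm_fst_le hD hn
  obtain ⟨z, hz, h⟩ := exists_inner_snd_eq_inner_fst (sobolevZero D) (C := C)
    (fun z hz => mod_cast hC z hz) (-hf.toLp f)
  refine ⟨z, hz, fun ψ hψ => ?_⟩
  let ψ' : testFunctions D := ⟨ψ, hψ⟩
  rw [← inner_snd_gradientGraph z ψ', h _ (gradientGraph_mem_sobolevZero ψ'), inner_neg_left,
    L2.inner_def]
  congr 1
  refine integral_congr_ae ?_
  filter_upwards [hf.coeFn_toLp, fst_gradientGraph ψ'] with x hfx hψx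
  rw [hfx, hψx]
  exact mul_comm _ _

namespace IsWeakSolution

lemma sub (hz : IsWeakSolution D f z) (hw : IsWeakSolution D g w)
    (hf : LocallyIntegrableOn f D) (hg : LocallyIntegrableOn g D) :
    IsWeakSolution D (fun x => f x - g x) (z - w) := by
  refine ⟨(sobolevZero D).sub_mem hz.mem hw.mem, fun ψ hψ => ?_⟩
  have inner_sub : ∫ x in D, ⟪(z - w).snd x, ∇ ψ x⟫ =
      (∫ x in D, ⟪z.snd x, ∇ ψ x⟫) - ∫ x in D, ⟪w.snd x, ∇ ψ x⟫ := by
    have inner_eq (z : L2Pair D) := inner_snd_gradientGraph z ⟨ψ, hψ⟩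
    rw [← inner_eq, ← inner_eq, ← inner_eq, WithLp.sub_snd, inner_sub_left]
  simp_rw [inner_sub, hz.integral_inner_gradient ψ hψ, hw.integral_inner_gradient ψ hψ, sub_mul]
  rw [integral_sub (hψ.integrable_mul hf).integrableOn (hψ.integrable_mul hg).integrableOn]
  ring

lemma hasDistribLaplacian (hz : IsWeakSolution D f z) (hD : MeasurableSet D) :
    HasDistribLaplacian D (D.indicator z.fst) (D.indicator f) := by
  intro φ hφ
  have fst_int : LocallyIntegrableOn z.fst D :=
    locallyIntegrableOn_of_locallyIntegrable_restrict
      ((Lp.memLp z.fst).locallyIntegrable one_le_two)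
  have snd_int : LocallyIntegrableOn z.snd D :=
    locallyIntegrableOn_of_locallyIntegrable_restrict
      ((Lp.memLp z.snd).locallyIntegrable one_le_two)
  simp_rw [← indicator_mul_left]
  rw [integral_indicator hD, integral_indicator hD, ← neg_inj,
    ← hz.integral_inner_gradient φ hφ]
  exact ((hasWeakGradient_of_mem_sobolevZero hz.mem).integral_inner_gradient fst_int snd_int
    hφ).symm

lemma nnnorm_snd_le (hz : IsWeakSolution D f z) {K : ℝ≥0}
    (hK : ∀ φ, IsTestFun D φ →
      ‖∫ x in D, f x * φ x‖ₑ ≤ K * eLpNorm (∇ φ) 2 (volume.restrict D)) : ‖z.snd‖₊ ≤ K := by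
  have bounded : ‖⟪z.snd, z.snd⟫‖₊ ≤ K * ‖z.snd‖₊ := by
    refine sobolevZero_induction (P := fun w => ‖⟪z.snd, w.snd⟫‖₊ ≤ K * ‖w.snd‖₊)
      (isClosed_le ?_ ?_) (fun φ => ?_) hz.mem
    · exact (continuous_const.inner (WithLp.continuous_snd 2 _ _)).nnnorm
    · exact continuous_const.mul (WithLp.continuous_snd 2 _ _).nnnorm
    · rw [← ENNReal.coe_le_coe, ENNReal.coe_mul, ← enorm_eq_nnnorm, ← enorm_eq_nnnorm,
        Lp.enorm_def, eLpNorm_congr_ae (snd_gradientGraph φ), inner_snd_gradientGraph,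
        hz.integral_inner_gradient φ.1 φ.2, enorm_neg]
      exact hK φ.1 φ.2
  rcases eq_zero_or_pos ‖z.snd‖₊ with h0 | h0
  · exact h0 ▸ zero_le
  · refine le_of_mul_le_mul_right (le_trans (le_of_eq ?_) bounded) h0
    rw [real_inner_self_eq_norm_mul_norm, nnnorm_mul, nnnorm_norm]

end IsWeakSolution

theorem exists_eLpNorm_fst_le (hD : IsBounded D) (hn : n ≠ 0) {p q : ℝ≥0∞}
    [ENNReal.HolderConjugate p q] (hp : p ≤ 2 ∨ n = 1) :
    ∃ C ≠ ∞, ∀ f z, MemLp f q (volume.restrict D) → IsWeakSolution D f z →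
      eLpNorm z.fst 2 (volume.restrict D) ≤ C * eLpNorm f q (volume.restrict D) := by
  obtain ⟨A, hA, hAφ⟩ := exists_eLpNorm_le_eLpNorm_gradient hD hn hp
  obtain ⟨B, hB⟩ := exists_nnnorm_fst_le hD hn
  refine ⟨B * A, ENNReal.mul_ne_top ENNReal.coe_ne_top hA, fun f z hf hz => ?_⟩
  have duality (φ : ℝ^n → ℝ) (hφ : IsTestFun D φ) : ‖∫ x in D, f x * φ x‖ₑ ≤
      A * eLpNorm f q (volume.restrict D) * eLpNorm (∇ φ) 2 (volume.restrict D) := by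
    have : ENNReal.HolderConjugate q p := .symm
    calc ‖∫ x in D, f x * φ x‖ₑ
        ≤ eLpNorm f q (volume.restrict D) * eLpNorm φ p (volume.restrict D) :=
          enorm_integral_mul_le hf.1 (hφ.memLp p _).1
      _ ≤ eLpNorm f q (volume.restrict D) * (A * eLpNorm (∇ φ) 2 (volume.restrict D)) := by
          gcongr
          exact hAφ φ hφ
      _ = _ := by ring
  lift A * eLpNorm f q (volume.restrict D) to ℝ≥0 using ENNReal.mul_ne_top hA hf.2.ne with K hK
  calc eLpNorm z.fst 2 (volume.restrict D) = ‖z.fst‖₊ := by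
        rw [← Lp.enorm_def, enorm_eq_nnnorm]
    _ ≤ B * K := by exact_mod_cast (hB z hz.mem).trans (by gcongr; exact hz.nnnorm_snd_le duality)
    _ = _ := by rw [hK, mul_assoc]

end WeakSolution

/-! ### Smooth solutions -/

lemma exists_contDiffOn_ae_eq {E F : Type*} [NormedAddCommGroup E] [NormedSpace ℝ E]
    [SecondCountableTopology E] [MeasurableSpace E] [OpensMeasurableSpace E]
    [NormedAddCommGroup F] [NormedSpace ℝ F] {μ : Measure E} [μ.IsOpenPosMeasure]
    {k : WithTop ℕ∞} {s : Set E} {v : E → F}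
    (h : ∀ x ∈ s, ∃ U ∈ 𝓝 x, ∃ g, ContDiff ℝ k g ∧ ∀ᵐ y ∂μ, y ∈ U → v y = g y) :
    ∃ w, ContDiffOn ℝ k w s ∧ ∀ᵐ y ∂μ, y ∈ s → v y = w y := by
  choose! U hU g hg hvg using h
  have diagonal {x y : E} (hx : x ∈ s) (hy : y ∈ s) (hyU : y ∈ interior (U x)) :
      g y y = g x y := by
    have overlap : g y =ᵐ[μ.restrict (interior (U x) ∩ interior (U y))] g x := by
      rw [EventuallyEq, ae_restrict_iff' (isOpen_interior.inter isOpen_interior).measurableSet]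
      filter_upwards [hvg x hx, hvg y hy] with t hxt hyt ht
      rw [← hyt (interior_subset ht.2), hxt (interior_subset ht.1)]
    exact Measure.eqOn_open_of_ae_eq overlap (isOpen_interior.inter isOpen_interior)
      (hg y hy).continuous.continuousOn (hg x hx).continuous.continuousOn
      ⟨hyU, mem_interior_iff_mem_nhds.2 (hU y hy)⟩
  refine ⟨fun x => g x x, fun x hx => ?_, measure_null_of_locally_null _ fun x hx => ?_⟩
  · refine (hg x hx).contDiffAt.contDiffWithinAt.congr_of_eventuallyEq ?_ rfl
    filter_upwards [self_mem_nhdsWithin, mem_nhdsWithin_of_mem_nhds (interior_mem_nhds.2 (hU x hx))]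
      with y hy hyU
    exact diagonal hx hy hyU
  · have hxs : x ∈ s := by_contra fun h => hx fun hxs => absurd hxs h
    refine ⟨_, inter_mem_nhdsWithin _ (interior_mem_nhds.2 (hU x hxs)),
      measure_mono_null ?_ (hvg x hxs)⟩
    rintro y ⟨hy, hyU⟩ hvy
    exact hy fun hys => (hvy (interior_subset hyU)).trans (diagonal hxs hys hyU).symm

lemma exists_memW120_weakLapEq_continuousOn {D : Set ℝ^n} (hD : IsOpen D) (hDb : IsBounded D)
    (hn : n ≠ 0) (hP : ∀ δ > 0, ∃ E R : ℝ^n → ℝ, IsParametrix δ E R) {f : ℝ^n → ℝ}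
    (hf : IsTestFun D f) : ∃ w, MemW120 D w ∧ WeakLapEq D f w ∧ ContinuousOn w D := by
  have : IsFiniteMeasure (volume.restrict D) := isFiniteMeasure_restrict.2 hDb.measure_lt_top.ne
  obtain ⟨z, hz⟩ := exists_isWeakSolution hDb hn (hf.memLp 2 _)
  have hΔ : HasDistribLaplacian D (D.indicator z.fst) f := by
    simpa only [indicator_eq_self.2 ((subset_tsupport f).trans hf.2.2)] using
      hz.hasDistribLaplacian hD.measurableSet
  have fst_int : Integrable (D.indicator z.fst) :=
    (integrable_indicator_iff hD.measurableSet).2 ((Lp.memLp z.fst).integrable one_le_two)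
  obtain ⟨w, hw, hzw⟩ := exists_contDiffOn_ae_eq (μ := volume) (s := D) fun x hx => by
    obtain ⟨r, hr, hrD⟩ := nhds_basis_closedBall.mem_iff.1 (hD.mem_nhds hx)
    obtain ⟨E, R, hER⟩ := hP (r / 2) (half_pos hr)
    exact ⟨ball x (r / 2), ball_mem_nhds x (half_pos hr),
      hΔ.exists_contDiff_ae_eq hER fst_int hf ((add_halves r).symm ▸ hrD)⟩
  have fst_eq : z.fst =ᵐ[volume.restrict D] w := by
    rw [EventuallyEq, ae_restrict_iff' hD.measurableSet]
    filter_upwards [hzw] with y hy hyD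
    rw [← hy hyD, indicator_of_mem hyD]
  have hw1 : ContDiffOn ℝ 1 w D := hw.of_le (mod_cast le_top)
  have gradient_int : LocallyIntegrableOn (∇ w) D := by
    refine ContinuousOn.locallyIntegrableOn ?_ hD.measurableSet
    exact (LinearIsometryEquiv.continuous _).comp_continuousOn
      (hw1.continuousOn_fderiv_of_isOpen hD le_rfl)
  have snd_eq : z.snd =ᵐ[volume.restrict D] ∇ w :=
    ((hasWeakGradient_of_mem_sobolevZero hz.mem).congr_left fst_eq).ae_eq hD
      (hasWeakGradient_gradient hD hw1)
      (locallyIntegrableOn_of_locallyIntegrable_restrict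
        ((Lp.memLp z.snd).locallyIntegrable one_le_two)) gradient_int
  have ⟨hw_mem, hw_eq⟩ := memW120_and_weakLapEq_iff.2 ⟨z, hz, fst_eq, snd_eq⟩
  exact ⟨w, hw_mem, hw_eq, hw.continuousOn⟩

lemma IsGreenFunction.isFundamentalSolution {D : Set ℝ^n} {G : ℝ^n → ℝ^n → ℝ}
    (hG : IsGreenFunction D G) {x : ℝ^n} (hx : x ∈ D) (hGx : IntegrableOn (G x) D)
    (hGs : ContDiffOn ℝ (⊤ : ℕ∞) (G x) (D \ {x})) : IsFundamentalSolution D x (G x) where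
  integrableOn := hGx
  contDiffOn := hGs
  integral_mul_laplacian φ hφ := (hG _ hφ.laplacian φ hφ.memW120 hφ.weakLapEq
    hφ.1.continuous.continuousOn x hx).symm

/-! ### Density of test functions -/

lemma exists_isTestFun_eqOn_one {D K : Set ℝ^n} (hD : IsOpen D) (hK : IsCompact K) (hKD : K ⊆ D) :
    ∃ χ, IsTestFun D χ ∧ EqOn χ 1 K ∧ ∀ x, ‖χ x‖ ≤ 1 := by
  obtain ⟨L, hL, hKL, hLD⟩ := exists_compact_between hK hD hKD
  obtain ⟨χ, h1, h0, h01⟩ := exists_contMDiffMap_one_nhds_of_subset_interior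
    (n := (⊤ : ℕ∞)) (modelWithCornersSelf ℝ ℝ^n) hK.isClosed hKL
  have hsupp : Function.support χ ⊆ L := Function.support_subset_iff'.2 h0
  refine ⟨χ, ⟨χ.contMDiff.contDiff, .of_support_subset_isCompact hL hsupp,
    (closure_minimal hsupp hL.isClosed).trans hLD⟩, fun x hx => h1.self_of_nhdsSet x hx,
    fun x => ?_⟩
  rw [Real.norm_of_nonneg (h01 x).1]
  exact (h01 x).2

lemma exists_isTestFun_eLpNorm_sub_le {D : Set ℝ^n} (hD : IsOpen D) (hD_fin : volume D ≠ ∞)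
    {q : ℝ≥0∞} (hq1 : 1 ≤ q) (hq : q ≠ ∞) {f : ℝ^n → ℝ} (hf : MemLp f q (volume.restrict D))
    {ε : ℝ} (hε : 0 < ε) :
    ∃ h, IsTestFun D h ∧ eLpNorm (f - h) q (volume.restrict D) ≤ ENNReal.ofReal ε := by
  have hε2 := half_pos hε
  obtain ⟨δ, hδ, hfδ⟩ := hf.eLpNorm_indicator_le hq1 hq hε2
  obtain ⟨K, hKD, hK, hDK⟩ := hD.measurableSet.exists_isCompact_sdiff_lt hD_fin
    (ENNReal.ofReal_pos.2 hδ).ne'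
  have small_outside : eLpNorm (Kᶜ.indicator f) q (volume.restrict D) ≤ ENNReal.ofReal (ε / 2) := by
    refine hfδ Kᶜ hK.measurableSet.compl ?_
    rw [Measure.restrict_apply hK.measurableSet.compl, inter_comm, ← sdiff_eq]
    exact hDK.le
  obtain ⟨g, -, hg, hfg⟩ := (hf.indicator hK.measurableSet).exist_eLpNorm_sub_le hq hq1 hε2
  obtain ⟨χ, hχ, hχ1, hχ_le⟩ := exists_isTestFun_eqOn_one hD hK hKD
  refine ⟨χ * g, hχ.mul_right hg, ?_⟩
  have split : f - χ * g = Kᶜ.indicator f + χ * (K.indicator f - g) := by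
    ext x
    by_cases hx : x ∈ K
    · simp [hx, hχ1 hx]
    · simp [hx, sub_eq_add_neg]
  have hfK := hf.1.indicator hK.measurableSet
  calc eLpNorm (f - χ * g) q (volume.restrict D)
      ≤ eLpNorm (Kᶜ.indicator f) q (volume.restrict D) +
          eLpNorm (χ * (K.indicator f - g)) q (volume.restrict D) := by
        rw [split]
        exact eLpNorm_add_le (hf.1.indicator hK.measurableSet.compl)
          (hχ.1.continuous.aestronglyMeasurable.mul
            (hfK.sub hg.continuous.aestronglyMeasurable)) hq1
    _ ≤ ENNReal.ofReal (ε / 2) + ENNReal.ofReal (ε / 2) := by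
        refine add_le_add small_outside ((eLpNorm_mono fun x => ?_).trans hfg)
        rw [Pi.mul_apply, norm_mul]
        exact mul_le_of_le_one_left (norm_nonneg _) (hχ_le x)
    _ = ENNReal.ofReal ε := by rw [← ENNReal.ofReal_add hε2.le hε2.le, add_halves]

/-! ### Stability and the representation formula -/

theorem exists_enorm_apply_le {D : Set ℝ^n} (hD : IsOpen D) (hDb : IsBounded D) (hn : n ≠ 0)
    {x : ℝ^n} (hx : x ∈ D) {g : ℝ^n → ℝ} (hg : IsFundamentalSolution D x g) {p q : ℝ≥0∞}
    [ENNReal.HolderConjugate p q] (hp : p ≤ 2 ∨ n = 1) (hgp : MemLp g p (volume.restrict D)) :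
    ∃ C ≠ ∞, ∀ f u z, MemLp f q (volume.restrict D) → IsWeakSolution D f z →
      z.fst =ᵐ[volume.restrict D] u → ContinuousOn u D →
      ‖u x‖ₑ ≤ C * eLpNorm f q (volume.restrict D) := by
  have : IsFiniteMeasure (volume.restrict D) := isFiniteMeasure_restrict.2 hDb.measure_lt_top.ne
  obtain ⟨r, hr, hrD⟩ := nhds_basis_closedBall.mem_iff.1 (hD.mem_nhds hx)
  obtain ⟨E, R, hER, hE⟩ := hg.exists_isParametrix hD hx hgp (half_pos hr)
  obtain ⟨C, hC, energy⟩ := exists_eLpNorm_fst_le hDb hn (p := p) (q := q) hp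
  have hR : eLpNorm R 2 ≠ ∞ := (hER.isTestFun.memLp 2 volume).eLpNorm_ne_top
  have hA := ENNReal.add_ne_top.2 ⟨hE.eLpNorm_ne_top, ENNReal.mul_ne_top hR hC⟩
  refine ⟨_, hA, fun f u z hf hz hzu hu => ?_⟩
  have ae_eq : D.indicator z.fst =ᵐ[volume] D.indicator u :=
    (ae_eq_restrict_iff_indicator_ae_eq hD.measurableSet).1 hzu
  have hΔ : HasDistribLaplacian D (D.indicator u) (D.indicator f) := fun φ hφ =>
    (integral_congr_ae (ae_eq.mono fun y hy => by simp only [hy])).symm.trans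
      (hz.hasDistribLaplacian hD.measurableSet φ hφ)
  have u_int : Integrable (D.indicator u) := ((integrable_indicator_iff hD.measurableSet).2
    ((Lp.memLp z.fst).integrable one_le_two)).congr ae_eq
  have f_int : Integrable (D.indicator f) := (integrable_indicator_iff hD.measurableSet).2
    (hf.integrable (ENNReal.HolderConjugate.one_le q p))
  have u_cont : ContinuousAt (D.indicator u) x :=
    (hu.continuousAt (hD.mem_nhds hx)).congr
      (eventuallyEq_of_mem (hD.mem_nhds hx) (eqOn_indicator (f := u)).symm)
  have local_bound := hΔ.enorm_apply_le hER u_int f_int ((add_halves r).symm ▸ hrD) u_cont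
    (p := p) (q := q)
  rw [indicator_of_mem hx, ← eLpNorm_congr_ae ae_eq,
    eLpNorm_indicator_eq_eLpNorm_restrict hD.measurableSet,
    eLpNorm_indicator_eq_eLpNorm_restrict hD.measurableSet] at local_bound
  rw [add_mul, mul_assoc]
  refine local_bound.trans ?_
  gcongr
  exact energy f z hf hz

lemma holderConjugate_lt_div_sub_one {p q r : ℝ≥0∞} [ENNReal.HolderConjugate p q] (hr : 1 ≤ r)
    (hrq : r < q) : p < r / (r - 1) := by
  have hr0 : r ≠ 0 := (zero_lt_one.trans_le hr).ne'
  rw [← ENNReal.inv_lt_inv, ENNReal.inv_div (.inr hrq.ne_top) (.inr hr0),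
    ENNReal.sub_div (by simp [hr0]), ENNReal.div_self hr0 hrq.ne_top, one_div,
    ← ENNReal.HolderConjugate.one_sub_inv q p]
  exact (ENNReal.cancel_of_ne (ENNReal.sub_ne_top ENNReal.one_ne_top)).tsub_lt_tsub_left_of_le
    (ENNReal.inv_le_one.2 hr) (ENNReal.inv_lt_inv.2 hrq)

lemma le_two_of_holderConjugate {p q : ℝ≥0∞} [ENNReal.HolderConjugate p q] (hq : 2 ≤ q) :
    p ≤ 2 := by
  rw [← ENNReal.inv_le_inv, ← ENNReal.HolderConjugate.one_sub_inv q p,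
    ← ENNReal.HolderConjugate.one_sub_inv 2 2]
  exact tsub_le_tsub_left (ENNReal.inv_le_inv.2 hq) 1

namespace IsGreenFunction

variable {D : Set ℝ^n} {G : ℝ^n → ℝ^n → ℝ} {x : ℝ^n} {f u : ℝ^n → ℝ}

/-- Both `u x` and the integral depend continuously on `f` in `L^q(D)`, and for the test function
`h` in place of `f` they agree. -/
lemma exists_enorm_sub_integral_le (hG : IsGreenFunction D G) (hD : IsOpen D)
    (hDb : IsBounded D) (hn : n ≠ 0) (hx : x ∈ D) (hGx : IsFundamentalSolution D x (G x))
    {p q : ℝ≥0∞} [ENNReal.HolderConjugate p q] (hp : p ≤ 2 ∨ n = 1)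
    (hGp : MemLp (G x) p (volume.restrict D)) (hf : MemLp f q (volume.restrict D))
    (hu : MemW120 D u) (hfu : WeakLapEq D f u) (hu_cont : ContinuousOn u D) :
    ∃ C ≠ ∞, ∀ h, IsTestFun D h →
      ‖u x - ∫ y in D, G x y * f y‖ₑ ≤ C * eLpNorm (f - h) q (volume.restrict D) := by
  have hq : 1 ≤ q := ENNReal.HolderConjugate.one_le q p
  obtain ⟨C, hC, stability⟩ := exists_enorm_apply_le hD hDb hn hx hGx (q := q) hp hGp
  refine ⟨_, ENNReal.add_ne_top.2 ⟨hC, hGp.eLpNorm_ne_top⟩, fun h hh => ?_⟩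
  have hhq : MemLp h q (volume.restrict D) := hh.memLp q _
  obtain ⟨w, hw, hhw, hw_cont⟩ := exists_memW120_weakLapEq_continuousOn hD hDb hn
    (fun δ hδ => (hGx.exists_isParametrix hD hx hGp hδ).imp fun _ => .imp fun _ h => h.1) hh
  obtain ⟨z, hz, hzu, -⟩ := memW120_and_weakLapEq_iff.1 ⟨hu, hfu⟩
  obtain ⟨z', hz', hzw, -⟩ := memW120_and_weakLapEq_iff.1 ⟨hw, hhw⟩
  have sub_ae_eq : (z - z').fst =ᵐ[volume.restrict D] u - w := by
    rw [WithLp.sub_fst]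
    exact (Lp.coeFn_sub _ _).trans (hzu.sub hzw)
  have hz_sub : IsWeakSolution D (f - h) (z - z') := hz.sub hz'
    (locallyIntegrableOn_of_locallyIntegrable_restrict (hf.locallyIntegrable hq))
    (hh.1.continuous.locallyIntegrable.locallyIntegrableOn D)
  have error_eq : u x - ∫ y in D, G x y * f y =
      (u - w) x - ∫ y in D, G x y * (f - h) y := by
    have integral_sub_eq : ∫ y in D, G x y * (f - h) y =
        (∫ y in D, G x y * f y) - ∫ y in D, G x y * h y := by
      simp_rw [Pi.sub_apply, mul_sub]
      exact integral_sub (hGp.integrable_mul hf) (hGp.integrable_mul hhq)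
    rw [integral_sub_eq, Pi.sub_apply, hG h hh w hw hhw hw_cont x hx]
    ring
  calc ‖u x - ∫ y in D, G x y * f y‖ₑ
      ≤ ‖(u - w) x‖ₑ + ‖∫ y in D, G x y * (f - h) y‖ₑ := error_eq ▸ enorm_sub_le
    _ ≤ C * eLpNorm (f - h) q (volume.restrict D) +
          eLpNorm (G x) p (volume.restrict D) * eLpNorm (f - h) q (volume.restrict D) :=
        add_le_add (stability _ _ _ (hf.sub hhq) hz_sub sub_ae_eq (hu_cont.sub hw_cont))
          (enorm_integral_mul_le hGp.1 (hf.sub hhq).1)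
    _ = _ := (add_mul _ _ _).symm

theorem eq_integral_of_memLp (hG : IsGreenFunction D G) (hD : IsOpen D)
    (hDb : IsBounded D) (hn : n ≠ 0) (hx : x ∈ D) (hGx : IsFundamentalSolution D x (G x))
    {p q : ℝ≥0∞} [ENNReal.HolderConjugate p q] (hp : p ≤ 2 ∨ n = 1) (hq : q ≠ ∞)
    (hGp : MemLp (G x) p (volume.restrict D)) (hf : MemLp f q (volume.restrict D))
    (hu : MemW120 D u) (hfu : WeakLapEq D f u) (hu_cont : ContinuousOn u D) :
    u x = ∫ y in D, G x y * f y := by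
  obtain ⟨C, hC, error_le⟩ :=
    hG.exists_enorm_sub_integral_le hD hDb hn hx hGx hp hGp hf hu hfu hu_cont
  have tendsto_zero : Tendsto (fun ε => C * ENNReal.ofReal ε) (𝓝[>] 0) (𝓝 0) := by
    simpa using ENNReal.Tendsto.const_mul
      (ENNReal.tendsto_ofReal (tendsto_id.mono_left (nhdsWithin_le_nhds (a := (0 : ℝ)))))
      (.inr hC)
  have error_eq_zero : ‖u x - ∫ y in D, G x y * f y‖ₑ = 0 := by
    refine le_antisymm (ge_of_tendsto tendsto_zero ?_) zero_le
    filter_upwards [self_mem_nhdsWithin] with ε hε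
    obtain ⟨h, hh, hfh⟩ := exists_isTestFun_eLpNorm_sub_le hD hDb.measure_lt_top.ne
      (ENNReal.HolderConjugate.one_le q p) hq hf hε
    exact (error_le h hh).trans (mul_le_mul_right hfh C)
  exact sub_eq_zero.1 (enorm_eq_zero.1 error_eq_zero)

end IsGreenFunction

lemma IsTestFun.of_dim_eq_zero {D : Set (ℝ^0)} (hD : D.Nonempty) (f : ℝ^0 → ℝ) :
    IsTestFun D f := by
  rw [Subsingleton.eq_univ_of_nonempty hD]
  have f_const : f = fun _ => f 0 := funext fun x => congrArg f (Subsingleton.elim x 0)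
  exact ⟨f_const ▸ contDiff_const, .of_compactSpace f, subset_univ _⟩

theorem green_representation_rough_data_general {D : Set ℝ^n} (hD : IsOpen D)
    (hDb : IsBounded D) {G : ℝ^n → ℝ^n → ℝ} (hG : IsGreenFunction D G) {x : ℝ^n} (hx : x ∈ D)
    (hGp : ∀ p : ℝ≥0∞, 1 ≤ p → p < n / (n - 1) → MemLp (G x) p (volume.restrict D))
    (hGs : ContDiffOn ℝ (⊤ : ℕ∞) (G x) (D \ {x})) {q : ℝ≥0∞} (hq : n < q) {f u : ℝ^n → ℝ}
    (hf : MemLp f q (volume.restrict D)) (hu : MemW120 D u) (hfu : WeakLapEq D f u)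
    (hu_cont : ContinuousOn u D) : u x = ∫ y in D, G x y * f y := by
  rcases eq_or_ne n 0 with rfl | hn
  · exact hG f (.of_dim_eq_zero ⟨x, hx⟩ f) u hu hfu hu_cont x hx
  have : IsFiniteMeasure (volume.restrict D) := isFiniteMeasure_restrict.2 hDb.measure_lt_top.ne
  have one_le_n : (1 : ℝ≥0∞) ≤ n := mod_cast Nat.one_le_iff_ne_zero.2 hn
  obtain ⟨r, hnr, hrq, hr⟩ : ∃ r : ℝ≥0∞, n < r ∧ r ≤ q ∧ r ≠ ∞ :=
    have ⟨r, hnr, hrq⟩ := exists_between hq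
    ⟨r, hnr, hrq.le, hrq.ne_top⟩
  have : ENNReal.HolderConjugate r.conjExponent r :=
    (ENNReal.HolderConjugate.conjExponent (one_le_n.trans hnr.le)).symm
  have hp : r.conjExponent < n / (n - 1) := holderConjugate_lt_div_sub_one one_le_n hnr
  have one_le_p : 1 ≤ r.conjExponent := ENNReal.HolderConjugate.one_le _ r
  have hp2 : r.conjExponent ≤ 2 ∨ n = 1 := by
    refine or_iff_not_imp_right.2 fun hn1 => le_two_of_holderConjugate (q := r) (hnr.le.trans' ?_)
    exact_mod_cast (Nat.two_le_iff n).2 ⟨hn, hn1⟩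
  have hGx := hG.isFundamentalSolution hx ((hGp _ one_le_p hp).integrable one_le_p) hGs
  exact hG.eq_integral_of_memLp hD hDb hn hx hGx hp2 hr (hGp _ one_le_p hp)
    (hf.mono_exponent hrq) hu hfu hu_cont

/-- **Green's function representation for rough data** (Lemma 2.3): on a bounded connected
Lipschitz domain `D`, if `f ∈ L^q(D)` with `q > n`, the (continuous representative of the)
weak solution `u ∈ W^{1,2}_0(D)` of `Δu = f` satisfies `u(x) = ∫_D G(x,y) f(y) dy` for all
`x ∈ D`. -/
theorem green_representation_rough_data
    (D : Set (EuclideanSpace ℝ (Fin n))) (hD : IsLipschitzDomain D) (hDconn : IsConnected D)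
    (G : EuclideanSpace ℝ (Fin n) → EuclideanSpace ℝ (Fin n) → ℝ)
    (hG : IsGreenFunction D G)
    (hGW1p0 : ∀ x ∈ D, ∀ p : ℝ≥0∞, 1 ≤ p → p < (n : ℝ≥0∞) / ((n : ℝ≥0∞) - 1) →
      MemW1p0 D p (fun y => G x y))
    (hGsym : ∀ x ∈ D, ∀ y ∈ D, x ≠ y → G x y = G y x)
    (hGsmooth : ContDiffOn ℝ (⊤ : ℕ∞)
      (fun p : EuclideanSpace ℝ (Fin n) × EuclideanSpace ℝ (Fin n) => G p.1 p.2)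
      ((D ×ˢ D) \ {p | p.1 = p.2}))
    (q : ℝ≥0∞) (hq : (n : ℝ≥0∞) < q)
    (f u : EuclideanSpace ℝ (Fin n) → ℝ)
    (hf : MemLp f q (volume.restrict D))
    (hu : MemW120 D u) (hweak : WeakLapEq D f u) (hucont : ContinuousOn u D) :
    ∀ x ∈ D, u x = ∫ y in D, G x y * f y :=
  fun x hx => green_representation_rough_data_general hD.1 hD.2.1 hG hx
    (fun p hp hpn => (hGW1p0 x hx p hp hpn).1.1)
    (hGsmooth.comp (contDiff_prodMk_right x).contDiffOn fun _ hy => ⟨⟨hx, hy.1⟩, Ne.symm hy.2⟩)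
    hq hf hu hweak hucont

end
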